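/- arXiv:math/0201136 — 3 statements merged into one kernel-verified Lean document; each statement's English description precedes it below -/
import Mathlib

section
/- The number of involutions of length n avoiding the pattern 132 equals the central binomial coefficient C(n, ⌊n/2⌋). -/
/-!
Involutions are modelled as functions `f : ℕ → ℕ` fixing every `i ≥ n`. Let `invSet n m` be the set
of those `132`-avoiding involutions of `{0, …, n-1}` whose values `≥ m` appear in increasing order.
Then `invSet n 0` contains only the identity, and `invSet n n = invSet n (n - 1)` contains all
`132`-avoiding involutions.

If `f ∈ invSet (n+2) (m+1)` is not in `invSet (n+2) m`, then the value `m` comes after a larger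
value; avoidance of `132` then leaves `m + 1` as the only possible value of `f 0`. Deleting the
cycle `(0, m+1)` yields an arbitrary element of `invSet n m`, so
`|invSet (n+2) (m+1)| = |invSet (n+2) m| + |invSet n m|` (`encard_invSet_succ`).

With `P m h = |invSet (m+h) m|` this reads `P (m+1) (h+1) = P m (h+2) + P m h`, together with
`P (m+1) 0 = P m 1` and `P 0 h = 1`: the recursion for `±1` walks of length `m` staying `≥ -h`.
The reflection principle suggests the solution, the sum of `C(m, j)` over
`(m+1-h)/2 ≤ j < (m+h+3)/2`; it is checked by induction via Pascal's rule (`encard_invSet`). At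
`h = 0` only the central binomial coefficient remains.
-/

def IsInvolution {n : ℕ} (π : Equiv.Perm (Fin n)) : Prop := ∀ i, π (π i) = i

def Avoids132 {n : ℕ} (π : Equiv.Perm (Fin n)) : Prop :=
  ¬ ∃ i j k : Fin n, i < j ∧ j < k ∧ π i < π k ∧ π k < π j

def fixCount {n : ℕ} (π : Equiv.Perm (Fin n)) : ℕ :=
  (Finset.univ.filter fun i => π i = i).card

/-! ### The sets `invSet n m` -/

/-- The `132`-avoiding involutions of `{0, …, n-1}`, extended by the identity to all of `ℕ`, in
which the values `≥ m` appear in increasing order. The points `≥ n` are fixed, so they take part in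
no `132` pattern and no inversion, and the conditions need not be restricted to indices `< n`. -/
def invSet (n m : ℕ) : Set (ℕ → ℕ) :=
  {f | (∀ i, f (f i) = i) ∧ (∀ i, n ≤ i → f i = i) ∧
    (∀ i j k, i < j → j < k → f i < f k → f k < f j → False) ∧
    (∀ i j, i < j → m ≤ f j → f j < f i → False)}

theorem invSet_zero (n : ℕ) : invSet n 0 = {id} := by
  ext f
  constructor
  · rintro ⟨h1, -, -, h4⟩
    refine Set.mem_singleton_iff.2 (funext fun i => ?_)
    have a := h1 i
    rcases lt_trichotomy (f i) i with h | h | h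
    · exact (h4 _ _ h (Nat.zero_le _) (by omega)).elim
    · exact h
    · exact (h4 _ _ h (Nat.zero_le _) (by omega)).elim
  · rintro rfl
    refine ⟨fun _ => rfl, fun _ _ => rfl, ?_, ?_⟩ <;> intros <;> simp only [id] at * <;> omega

theorem invSet_lt {n m : ℕ} {f : ℕ → ℕ} (hf : f ∈ invSet n m) {x : ℕ} (hx : x < n) : f x < n := by
  by_contra h
  have h1 := hf.1 x
  have h2 := hf.2.1 (f x) (by omega)
  omega

/-- The largest value `n` of an involution of `{0, …, n}` is in order with all values `≥ n`. -/
theorem invSet_top (n : ℕ) : invSet (n + 1) (n + 1) = invSet (n + 1) n := by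
  ext f
  constructor
  · intro hf
    obtain ⟨h1, h2, h3, h4⟩ := id hf
    refine ⟨h1, h2, h3, fun i j hij hj hji => ?_⟩
    by_cases hjn : j < n + 1
    · have a := invSet_lt hf (x := i) (by omega)
      omega
    · exact h4 i j hij (by rw [h2 j (by omega)]; omega) hji
  · rintro ⟨h1, h2, h3, h4⟩
    exact ⟨h1, h2, h3, fun i j hij hj hji => h4 i j hij (by omega) hji⟩

/-! ### Insertion and deletion of the cycle through `0` -/

/-- The increasing enumeration of the natural numbers other than `0` and `m + 1`. -/
def skipTwo (m i : ℕ) : ℕ := if i < m then i + 1 else i + 2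

/-- The inverse of `skipTwo m`; its values at `0` and `m + 1` carry no meaning. -/
def unskipTwo (m j : ℕ) : ℕ := if j ≤ m then j - 1 else j - 2

theorem unskipTwo_skipTwo (m i : ℕ) : unskipTwo m (skipTwo m i) = i := by
  unfold unskipTwo skipTwo; split_ifs <;> omega

theorem skipTwo_unskipTwo {m j : ℕ} (h0 : j ≠ 0) (h1 : j ≠ m + 1) :
    skipTwo m (unskipTwo m j) = j := by
  unfold unskipTwo skipTwo; split_ifs <;> omega

theorem skipTwo_lt_iff (m i j : ℕ) : skipTwo m i < skipTwo m j ↔ i < j := by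
  unfold skipTwo; split_ifs <;> omega

theorem skipTwo_ne_zero (m i : ℕ) : skipTwo m i ≠ 0 := by
  unfold skipTwo; split_ifs <;> omega

theorem skipTwo_ne_succ (m i : ℕ) : skipTwo m i ≠ m + 1 := by
  unfold skipTwo; split_ifs <;> omega

theorem succ_le_skipTwo_iff (m i : ℕ) : m + 1 ≤ skipTwo m i ↔ m ≤ i := by
  unfold skipTwo; split_ifs <;> omega

theorem skipTwo_lt_add_two {m n i : ℕ} (hm : m ≤ n) : skipTwo m i < n + 2 ↔ i < n := by
  unfold skipTwo; split_ifs <;> omega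

theorem eq_zero_or_succ_or_skipTwo (m x : ℕ) : x = 0 ∨ x = m + 1 ∨ ∃ i, x = skipTwo m i := by
  by_cases h0 : x = 0
  · exact Or.inl h0
  · by_cases h1 : x = m + 1
    · exact Or.inr (Or.inl h1)
    · exact Or.inr (Or.inr ⟨_, (skipTwo_unskipTwo h0 h1).symm⟩)

/-- Insertion of the two-cycle `(0, m+1)` into `g`. -/
def addCycle (m : ℕ) (g : ℕ → ℕ) (x : ℕ) : ℕ :=
  if x = 0 then m + 1 else if x = m + 1 then 0 else skipTwo m (g (unskipTwo m x))

theorem addCycle_zero (m : ℕ) (g : ℕ → ℕ) : addCycle m g 0 = m + 1 := by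
  simp [addCycle]

theorem addCycle_succ (m : ℕ) (g : ℕ → ℕ) : addCycle m g (m + 1) = 0 := by
  simp [addCycle]

theorem addCycle_skipTwo (m : ℕ) (g : ℕ → ℕ) (i : ℕ) :
    addCycle m g (skipTwo m i) = skipTwo m (g i) := by
  simp [addCycle, skipTwo_ne_zero, skipTwo_ne_succ, unskipTwo_skipTwo]

theorem addCycle_injective (m : ℕ) : Function.Injective (addCycle m) := by
  intro g g' h
  funext i
  have := congrFun h (skipTwo m i)
  rw [addCycle_skipTwo, addCycle_skipTwo] at this
  simpa only [unskipTwo_skipTwo] using congrArg (unskipTwo m) this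

/-- A `132` through the new points `0` and `m + 1` would start at one of them, and would need a
descent among the values `≥ m` or the positions `≥ m` of `g`. -/
theorem addCycle_mem {n m : ℕ} (hm : m ≤ n) {g : ℕ → ℕ} (hg : g ∈ invSet n m) :
    addCycle m g ∈ invSet (n + 2) (m + 1) := by
  obtain ⟨h1, h2, h3, h4⟩ := hg
  refine ⟨fun x => ?_, fun x hx => ?_, fun i j k hij hjk hik hkj => ?_, fun i j hij hj hji => ?_⟩
  · rcases eq_zero_or_succ_or_skipTwo m x with rfl | rfl | ⟨i, rfl⟩
    · rw [addCycle_zero, addCycle_succ]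
    · rw [addCycle_succ, addCycle_zero]
    · rw [addCycle_skipTwo, addCycle_skipTwo, h1]
  · rcases eq_zero_or_succ_or_skipTwo m x with rfl | rfl | ⟨i, rfl⟩
    · omega
    · omega
    · have := skipTwo_lt_add_two (i := i) hm
      rw [addCycle_skipTwo, h2 i (by omega)]
  · rcases eq_zero_or_succ_or_skipTwo m k with rfl | rfl | ⟨k, rfl⟩
    · omega
    · rw [addCycle_succ] at hik; omega
    rcases eq_zero_or_succ_or_skipTwo m j with rfl | rfl | ⟨j, rfl⟩
    · omega
    · rw [addCycle_succ] at hkj; omega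
    rw [addCycle_skipTwo, addCycle_skipTwo, skipTwo_lt_iff] at hkj
    rw [skipTwo_lt_iff] at hjk
    rcases eq_zero_or_succ_or_skipTwo m i with rfl | rfl | ⟨i, rfl⟩
    · rw [addCycle_zero, addCycle_skipTwo] at hik
      exact h4 j k hjk ((succ_le_skipTwo_iff _ _).1 hik.le) hkj
    · -- As `g` is an involution, it is also increasing on the positions `≥ m`.
      have hmj := (succ_le_skipTwo_iff _ _).1 hij.le
      exact h4 (g k) (g j) hkj (by rwa [h1]) (by rwa [h1, h1])
    · rw [addCycle_skipTwo, addCycle_skipTwo, skipTwo_lt_iff] at hik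
      rw [skipTwo_lt_iff] at hij
      exact h3 i j k hij hjk hik hkj
  · rcases eq_zero_or_succ_or_skipTwo m j with rfl | rfl | ⟨j, rfl⟩
    · omega
    · rw [addCycle_succ] at hj; omega
    rcases eq_zero_or_succ_or_skipTwo m i with rfl | rfl | ⟨i, rfl⟩
    · rw [addCycle_zero] at hji; omega
    · rw [addCycle_succ] at hji; omega
    rw [addCycle_skipTwo, addCycle_skipTwo, skipTwo_lt_iff] at hji
    rw [addCycle_skipTwo, succ_le_skipTwo_iff] at hj
    rw [skipTwo_lt_iff] at hij
    exact h4 i j hij hj hji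

theorem exists_addCycle {n m : ℕ} (hm : m ≤ n) {f : ℕ → ℕ} (hf : f ∈ invSet (n + 2) (m + 1))
    (h0 : f 0 = m + 1) : ∃ g ∈ invSet n m, addCycle m g = f := by
  obtain ⟨h1, h2, h3, h4⟩ := hf
  have hs : f (m + 1) = 0 := by rw [← h0, h1]
  have key : ∀ i, skipTwo m (unskipTwo m (f (skipTwo m i))) = f (skipTwo m i) := by
    intro i
    apply skipTwo_unskipTwo
    · intro h
      apply skipTwo_ne_succ m i
      rw [← h1 (skipTwo m i), h, h0]
    · intro h
      apply skipTwo_ne_zero m i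
      rw [← h1 (skipTwo m i), h, hs]
  refine ⟨fun i => unskipTwo m (f (skipTwo m i)), ⟨fun i => ?_, fun i hi => ?_,
    fun i j k hij hjk hik hkj => ?_, fun i j hij hj hji => ?_⟩, ?_⟩
  · simp only [key, h1, unskipTwo_skipTwo]
  · have := skipTwo_lt_add_two (i := i) hm
    simp only [h2 (skipTwo m i) (by omega), unskipTwo_skipTwo]
  · rw [← skipTwo_lt_iff m, key, key] at hik hkj
    rw [← skipTwo_lt_iff m] at hij hjk
    exact h3 _ _ _ hij hjk hik hkj
  · rw [← skipTwo_lt_iff m, key, key] at hji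
    rw [← succ_le_skipTwo_iff, key] at hj
    rw [← skipTwo_lt_iff m] at hij
    exact h4 _ _ hij hj hji
  · funext x
    rcases eq_zero_or_succ_or_skipTwo m x with rfl | rfl | ⟨i, rfl⟩
    · rw [addCycle_zero, h0]
    · rw [addCycle_succ, hs]
    · rw [addCycle_skipTwo, key]

/-- An element of `invSet (n+2) (m+1)` outside `invSet (n+2) m` has `m + 1` at position `0`, since
otherwise `m + 1` and a later `m` complete a `132` with the value at `0`, or `m + 1` is out of
order. -/
theorem invSet_succ {n m : ℕ} (hm : m ≤ n) :
    invSet (n + 2) (m + 1) = invSet (n + 2) m ∪ addCycle m '' invSet n m := by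
  ext f
  constructor
  · intro hf
    by_cases h0 : f 0 = m + 1
    · obtain ⟨g, hg, rfl⟩ := exists_addCycle hm hf h0
      exact Or.inr ⟨g, hg, rfl⟩
    · left
      obtain ⟨h1, h2, h3, h4⟩ := hf
      refine ⟨h1, h2, h3, fun i j hij hj hji => ?_⟩
      by_cases hj' : m + 1 ≤ f j
      · exact h4 i j hij hj' hji
      -- Now `f j = m`, and the value `m + 1` precedes it, at a position other than `0`. If
      -- `f 0 < m`, the values `f 0`, `m + 1`, `m` form a `132`; if `f 0 > m`, then `f 0` and `m + 1`
      -- are out of order.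
      have e := h1 (m + 1)
      have hp0 : f (m + 1) ≠ 0 := fun h => h0 (by rw [← h, e])
      have hip : f (m + 1) ≤ i := by
        by_contra! h
        exact h4 i (f (m + 1)) h (by omega) (by
          rcases Nat.lt_or_ge (f (f (m + 1))) (f i) with h' | h'
          · exact h'
          · have hi : f i = m + 1 := by omega
            have e2 := h1 i
            rw [hi] at e2
            omega)
      rcases lt_trichotomy (f 0) m with h | h | h
      · exact h3 0 (f (m + 1)) j (by omega) (by omega) (by omega) (by omega)
      · have a := h1 0
        have b := h1 j
        have c : f j = m := by omega
        rw [h] at a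
        rw [c] at b
        omega
      · exact h4 0 (f (m + 1)) (by omega) (by omega) (by omega)
  · rintro (⟨h1, h2, h3, h4⟩ | ⟨g, hg, rfl⟩)
    · exact ⟨h1, h2, h3, fun i j hij hj hji => h4 i j hij (by omega) hji⟩
    · exact addCycle_mem hm hg

theorem encard_invSet_succ {n m : ℕ} (hm : m ≤ n) :
    (invSet (n + 2) (m + 1)).encard = (invSet (n + 2) m).encard + (invSet n m).encard := by
  rw [invSet_succ hm, Set.encard_union_eq, (addCycle_injective m).encard_image]
  rw [Set.disjoint_left]
  rintro _ ⟨h1, h2, h3, h4⟩ ⟨g, hg, rfl⟩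
  -- The value `m + 1` stands at position `0`, before the value `m`.
  have e := h1 m
  have a := addCycle_zero m g
  refine h4 0 (addCycle m g m) (Nat.pos_of_ne_zero fun h => ?_) (by omega) (by omega)
  rw [h] at e
  omega

/-! ### Solution of the recursion -/

open Finset in
theorem sum_choose_succ (m k : ℕ) :
    ∑ j ∈ range k, (m + 1).choose j =
      ∑ j ∈ range k, m.choose j + ∑ j ∈ range (k - 1), m.choose j := by
  cases k with
  | zero => simp
  | succ k =>
    rw [Finset.sum_range_succ', Finset.sum_range_succ' _ k]
    simp only [Nat.choose_succ_succ', Finset.sum_add_distrib, Nat.choose_zero_right,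
      Nat.add_sub_cancel]
    omega

/-- `|invSet (m+h) m|` is the sum of `C(m, j)` over `(m+1-h)/2 ≤ j < (m+h+3)/2`, stated without
subtraction of sums. The truncated `m + 1 - h` cuts the range of `j` off at `0`. -/
theorem encard_invSet (m : ℕ) : ∀ h, ∃ a : ℕ, (invSet (m + h) m).encard = a ∧
    a + ∑ j ∈ Finset.range ((m + 1 - h) / 2), m.choose j =
      ∑ j ∈ Finset.range ((m + h + 3) / 2), m.choose j := by
  induction m with
  | zero =>
    intro h
    refine ⟨1, by rw [invSet_zero]; simp, ?_⟩
    have e1 : (0 + 1 - h) / 2 = 0 := by omega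
    obtain ⟨c, hc⟩ : ∃ c, (0 + h + 3) / 2 = c + 1 := ⟨(0 + h + 3) / 2 - 1, by omega⟩
    rw [e1, hc, Finset.sum_range_succ']
    simp
  | succ m ih =>
    intro h
    cases h with
    | zero =>
      obtain ⟨a, ha, hs⟩ := ih 1
      refine ⟨a, by rw [Nat.add_zero, invSet_top, ha], ?_⟩
      rw [sum_choose_succ, sum_choose_succ]
      have e1 : (m + 1 + 1 - 0) / 2 - 1 = (m + 1 - 1) / 2 := by omega
      have e2 : (m + 1 + 0 + 3) / 2 - 1 = (m + 1 + 1 - 0) / 2 := by omega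
      have e3 : (m + 1 + 0 + 3) / 2 = (m + 1 + 3) / 2 := by omega
      rw [e1, e2, e3]
      omega
    | succ h =>
      obtain ⟨a, ha, hs⟩ := ih h
      obtain ⟨b, hb, ht⟩ := ih (h + 2)
      refine ⟨b + a, ?_, ?_⟩
      · have e : m + 1 + (h + 1) = m + h + 2 := by omega
        rw [e, encard_invSet_succ (by omega), ha, Nat.add_assoc, hb]
        push_cast
        rfl
      · rw [sum_choose_succ, sum_choose_succ]
        have e1 : (m + 1 + 1 - (h + 1)) / 2 = (m + 1 - h) / 2 := by omega
        have e2 : (m + 1 - h) / 2 - 1 = (m + 1 - (h + 2)) / 2 := by omega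
        have e3 : (m + 1 + (h + 1) + 3) / 2 = (m + (h + 2) + 3) / 2 := by omega
        have e4 : (m + (h + 2) + 3) / 2 - 1 = (m + h + 3) / 2 := by omega
        rw [e1, e2, e3, e4]
        omega

theorem ncard_invSet (n : ℕ) : (invSet n n).ncard = n.choose (n / 2) := by
  obtain ⟨a, ha, hs⟩ := encard_invSet n 0
  have e : (n + 0 + 3) / 2 = (n + 1 - 0) / 2 + 1 := by omega
  rw [e, Finset.sum_range_succ] at hs
  have hc : n.choose ((n + 1 - 0) / 2) = n.choose (n / 2) :=
    Nat.choose_symm_of_eq_add (by omega)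
  rw [Nat.add_zero] at ha
  rw [Set.ncard, ha, ENat.toNat_natCast]
  omega

/-! ### Permutations of `Fin n` as functions on `ℕ` -/

/-- Extension of a permutation of `Fin n` to `ℕ` by the identity. -/
def extendNat {n : ℕ} (π : Equiv.Perm (Fin n)) (x : ℕ) : ℕ :=
  if h : x < n then (π ⟨x, h⟩ : ℕ) else x

theorem extendNat_coe {n : ℕ} (π : Equiv.Perm (Fin n)) (x : Fin n) : extendNat π x = π x := by
  simp [extendNat]

theorem extendNat_of_le {n : ℕ} (π : Equiv.Perm (Fin n)) {x : ℕ} (h : n ≤ x) :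
    extendNat π x = x := by
  simp [extendNat, h]

theorem extendNat_lt {n : ℕ} (π : Equiv.Perm (Fin n)) {x : ℕ} (h : x < n) :
    extendNat π x < n := by
  simp [extendNat, h]

theorem extendNat_mem {n : ℕ} {π : Equiv.Perm (Fin n)} (h1 : IsInvolution π) (h2 : Avoids132 π) :
    extendNat π ∈ invSet n n := by
  refine ⟨fun x => ?_, fun x hx => extendNat_of_le π hx, fun i j k hij hjk hik hkj => ?_,
    fun i j hij hj hji => ?_⟩
  · by_cases hx : x < n
    · lift x to Fin n using hx
      rw [extendNat_coe, extendNat_coe, h1]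
    · rw [extendNat_of_le π (x := x) (by omega), extendNat_of_le π (by omega)]
  · by_cases hk : k < n
    · lift k to Fin n using hk
      lift j to Fin n using by omega
      lift i to Fin n using by omega
      simp only [extendNat_coe] at hik hkj
      exact h2 ⟨i, j, k, hij, hjk, hik, hkj⟩
    · rw [extendNat_of_le π (x := k) (by omega)] at hkj
      by_cases hj : j < n
      · have := extendNat_lt π hj
        omega
      · rw [extendNat_of_le π (by omega)] at hkj
        omega
  · have hj' : n ≤ j := by
      by_contra! h
      have := extendNat_lt π h
      omega
    rw [extendNat_of_le π hj'] at hji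
    by_cases hi : i < n
    · have := extendNat_lt π hi
      omega
    · rw [extendNat_of_le π (by omega)] at hji
      omega

theorem exists_extendNat {n : ℕ} {f : ℕ → ℕ} (hf : f ∈ invSet n n) :
    ∃ π : Equiv.Perm (Fin n), (IsInvolution π ∧ Avoids132 π) ∧ extendNat π = f := by
  have hlt : ∀ x : Fin n, f x < n := fun x => invSet_lt hf x.2
  have hinv : Function.Involutive (fun x : Fin n => (⟨f x, hlt x⟩ : Fin n)) :=
    fun x => Fin.ext (hf.1 x)
  refine ⟨hinv.toPerm, ⟨hinv, ?_⟩, ?_⟩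
  · rintro ⟨i, j, k, hij, hjk, hik, hkj⟩
    exact hf.2.2.1 i j k hij hjk hik hkj
  · funext x
    by_cases hx : x < n
    · lift x to Fin n using hx
      rw [extendNat_coe]
      rfl
    · rw [extendNat_of_le _ (by omega), hf.2.1 x (by omega)]

theorem stmt0 (n : ℕ) :
    Nat.card {π : Equiv.Perm (Fin n) // IsInvolution π ∧ Avoids132 π} =
      Nat.choose n (n / 2) := by
  rw [← ncard_invSet, ← Nat.card_coe_set_eq]
  refine Nat.card_eq_of_bijective
    (fun π => (⟨extendNat π.1, extendNat_mem π.2.1 π.2.2⟩ : invSet n n)) ⟨?_, ?_⟩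
  · intro π σ h
    refine Subtype.ext (Equiv.ext fun x => Fin.ext ?_)
    have := congrFun (congrArg Subtype.val h) (x : ℕ)
    simpa only [extendNat_coe] using this
  · rintro ⟨f, hf⟩
    obtain ⟨π, hπ, rfl⟩ := exists_extendNat hf
    exact ⟨⟨π, hπ⟩, rfl⟩
end

section
/- There is a bijection between involutions of length n avoiding 132 and primitive Dyck words of length n, i.e., words w over {x, x̄} such that every prefix w' satisfies |w'|_x ≥ |w'|_x̄. Under this bijection the number of fixed points of the involution equals |w|_x − |w|_x̄. -/
def IsPrimDyck {n : ℕ} (w : Fin n → Bool) : Prop :=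
  ∀ m : ℕ,
    (Finset.univ.filter fun i : Fin n => (i : ℕ) < m ∧ w i = false).card ≤
    (Finset.univ.filter fun i : Fin n => (i : ℕ) < m ∧ w i = true).card

section

/-! ### Excedances of 132-avoiding involutions -/

variable {n : ℕ}

/-- `Good d π`: `π` is a 132-avoiding involution whose excedances are exactly the points
`0, …, d - 1`. The field `le` follows from the others for `n > 0`; for `n = 0` it makes `d`
well defined (namely `0`). -/
structure Good (d : ℕ) (π : Equiv.Perm (Fin n)) : Prop where
  inv : ∀ i, π (π i) = i
  av : ∀ i j k, i < j → j < k → π i < π k → π k < π j → False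
  exc : ∀ i, i < π i ↔ (i : ℕ) < d
  le : 2 * d ≤ n

theorem fixCount_add {π : Equiv.Perm (Fin n)} (h : IsInvolution π) :
    fixCount π + 2 * (Finset.univ.filter fun i => i < π i).card = n := by
  have h1 : (Finset.univ.filter fun i => i < π i).card =
      (Finset.univ.filter fun i => π i < i).card := by
    refine Finset.card_nbij' π π ?_ ?_ ?_ ?_ <;> intro i hi <;> simp_all [h i]
  have h2 := Finset.card_filter_add_card_filter_not (s := (Finset.univ : Finset (Fin n)))
    (fun i => π i = i)
  have h3 := Finset.card_filter_add_card_filter_not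
    (s := Finset.univ.filter fun i => ¬ π i = i) (fun i => i < π i)
  rw [Finset.filter_filter, Finset.filter_filter] at h3
  have e1 : (Finset.univ.filter fun i => ¬ π i = i ∧ i < π i) =
      Finset.univ.filter fun i => i < π i := by
    ext i; simp; intro h; exact h.ne'
  have e2 : (Finset.univ.filter fun i => ¬ π i = i ∧ ¬ i < π i) =
      Finset.univ.filter fun i => π i < i := by
    ext i; simp; exact ⟨fun h => lt_of_le_of_ne h.2 h.1, fun h => ⟨h.ne, h.le⟩⟩
  rw [e1, e2] at h3
  simp only [Finset.card_univ, Fintype.card_fin] at h2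
  unfold fixCount
  omega

/-- The excedances of a 132-avoiding involution are closed downwards: otherwise `i < j < π j`
is an occurrence of 132. -/
theorem exc_of_lt {π : Equiv.Perm (Fin n)} (h : IsInvolution π) (ha : Avoids132 π)
    {i j : Fin n} (hij : i < j) (hj : j < π j) : i < π i := by
  by_contra hi
  have := h j
  exact ha ⟨i, j, π j, hij, hj, by rw [h j]; exact (not_lt.1 hi).trans_lt hij, by rwa [h j]⟩

/-- `Good d` says that `π` is a 132-avoiding involution with `d` excedances; their position is
then automatic. -/
theorem good_iff (d : ℕ) (π : Equiv.Perm (Fin n)) :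
    Good d π ↔ (IsInvolution π ∧ Avoids132 π) ∧
      (Finset.univ.filter fun i => i < π i).card = d := by
  constructor
  · rintro ⟨h1, h2, h3, h4⟩
    refine ⟨⟨h1, fun ⟨i, j, k, a, b, c, e⟩ => h2 i j k a b c e⟩, ?_⟩
    simp only [h3, Fin.card_filter_val_lt]
    omega
  · rintro ⟨⟨h1, h2⟩, h3⟩
    refine ⟨h1, fun i j k a b c e => h2 ⟨i, j, k, a, b, c, e⟩, fun i => ?_, ?_⟩
    · constructor
      · intro hi
        have : Finset.Iic i ⊆ Finset.univ.filter fun i => i < π i := by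
          intro j hj
          rcases (Finset.mem_Iic.1 hj).lt_or_eq with hj | rfl
          · simpa using exc_of_lt h1 h2 hj hi
          · simpa using hi
        have := Finset.card_le_card this
        rw [Fin.card_Iic] at this
        omega
      · contrapose!
        intro hi
        have : (Finset.univ.filter fun i => i < π i) ⊆ Finset.Iio i := by
          intro j hj
          rw [Finset.mem_Iio]
          by_contra hj'
          rcases (not_lt.1 hj').lt_or_eq with hj' | rfl
          · exact absurd (exc_of_lt h1 h2 hj' (by simpa using hj)) (not_lt.2 hi)
          · exact absurd (by simpa using hj) (not_lt.2 hi)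
        have := Finset.card_le_card this
        rw [Fin.card_Iio] at this
        omega
    · have := fixCount_add h1
      omega

theorem Good.fixCount {d : ℕ} {π : Equiv.Perm (Fin n)} (h : Good d π) :
    fixCount π + 2 * d = n := by
  obtain ⟨⟨h1, -⟩, h2⟩ := (good_iff d π).1 h
  have := fixCount_add h1
  omega

/-! ### Inserting a fixed point -/

/-- The permutation obtained from `π` by inserting a new fixed point at position `d`. -/
def ins (d : Fin (n + 1)) (π : Equiv.Perm (Fin n)) : Equiv.Perm (Fin (n + 1)) :=
  (finSuccEquiv' d).trans (π.optionCongr.trans (finSuccEquiv' d).symm)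

theorem ins_self (d : Fin (n + 1)) (π : Equiv.Perm (Fin n)) : ins d π d = d := by
  simp [ins]

theorem ins_succAbove (d : Fin (n + 1)) (π : Equiv.Perm (Fin n)) (i : Fin n) :
    ins d π (d.succAbove i) = d.succAbove (π i) := by
  simp [ins]

theorem succAbove_lt_val_iff (d : Fin (n + 1)) (i : Fin n) :
    ((d.succAbove i : Fin (n + 1)) : ℕ) < d ↔ (i : ℕ) < d := by
  rw [← Fin.lt_def, Fin.succAbove_lt_iff_castSucc_lt, Fin.lt_def, Fin.val_castSucc]

theorem good_ins {d : Fin (n + 1)} {π : Equiv.Perm (Fin n)} (h : Good (d : ℕ) π) :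
    Good (d : ℕ) (ins d π) := by
  have hinv : ∀ i, ins d π (ins d π i) = i := by
    intro i
    obtain rfl | ⟨i, rfl⟩ := Fin.eq_self_or_eq_succAbove d i
    · simp only [ins_self]
    · simp only [ins_succAbove, h.inv]
  have hexc : ∀ i, i < ins d π i ↔ (i : ℕ) < d := by
    intro i
    obtain rfl | ⟨i, rfl⟩ := Fin.eq_self_or_eq_succAbove d i
    · simp [ins_self]
    · rw [ins_succAbove, Fin.succAbove_lt_succAbove_iff, h.exc, succAbove_lt_val_iff]
  refine ⟨hinv, ?_, hexc, by have := h.le; omega⟩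
  intro i j k hij hjk h1 h2
  have hd := ins_self d π
  have hi := hexc i
  have hj := hexc j
  have hi' := hexc (ins d π i)
  have hk' := hexc (ins d π k)
  rw [hinv] at hi' hk'
  have hk := hexc k
  -- An occurrence of 132 in `ins d π` cannot involve `d`: every point before `d` is sent
  -- above `d`, and every point after `d` is fixed or sent below `d`.
  have key : i = d ∨ j = d ∨ k = d → False := by
    rintro (rfl | rfl | rfl) <;> omega
  obtain rfl | ⟨i, rfl⟩ := Fin.eq_self_or_eq_succAbove d i
  · exact key (by simp)
  obtain rfl | ⟨j, rfl⟩ := Fin.eq_self_or_eq_succAbove d j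
  · exact key (by simp)
  obtain rfl | ⟨k, rfl⟩ := Fin.eq_self_or_eq_succAbove d k
  · exact key (by simp)
  simp only [ins_succAbove, Fin.succAbove_lt_succAbove_iff] at *
  exact h.av i j k hij hjk h1 h2

/-- Every involution of degree `d` fixing `d` arises by inserting that fixed point. -/
theorem exists_ins {d : Fin (n + 1)} {τ : Equiv.Perm (Fin (n + 1))} (h : Good (d : ℕ) τ)
    (hd : τ d = d) : ∃ π : Equiv.Perm (Fin n), Good (d : ℕ) π ∧ ins d π = τ := by
  have : ∀ i, ∃ j, τ (d.succAbove i) = d.succAbove j := by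
    intro i
    refine (Fin.eq_self_or_eq_succAbove d _).resolve_left fun hi => ?_
    exact Fin.succAbove_ne d i (τ.injective (hi.trans hd.symm))
  choose g hg using this
  have hgg : Function.Involutive g := by
    intro i
    apply Fin.succAbove_right_injective (p := d)
    rw [← hg, ← hg, h.inv]
  refine ⟨hgg.toPerm, ⟨hgg, ?_, ?_, ?_⟩, ?_⟩
  · intro i j k
    simp only [Function.Involutive.coe_toPerm]
    rw [← Fin.succAbove_lt_succAbove_iff (p := d), ← Fin.succAbove_lt_succAbove_iff (p := d),
      ← Fin.succAbove_lt_succAbove_iff (p := d) (i := g i),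
      ← Fin.succAbove_lt_succAbove_iff (p := d) (i := g k), ← hg, ← hg, ← hg]
    exact h.av _ _ _
  · intro i
    simp only [Function.Involutive.coe_toPerm]
    rw [← Fin.succAbove_lt_succAbove_iff (p := d), ← hg, h.exc, succAbove_lt_val_iff]
  · have h1 := h.fixCount
    have : 0 < fixCount τ := Finset.card_pos.2 ⟨d, by simpa using hd⟩
    omega
  · ext i : 1
    obtain rfl | ⟨i, rfl⟩ := Fin.eq_self_or_eq_succAbove d i
    · rw [ins_self, hd]
    · rw [ins_succAbove, hg]; rfl

/-! ### Joining and splitting a 2-cycle -/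

/-- If `f` is the fixed point following the fixed point `d`, the number of excedances of `τ`,
then joining `d` and `f` to a 2-cycle keeps `τ` 132-avoiding and raises its degree by one. In the
result the point `d + 1` is not fixed. -/
theorem good_join {d f : Fin n} {τ : Equiv.Perm (Fin n)} (h : Good (d : ℕ) τ)
    (hd : τ d = d) (hf : τ f = f) (hdf : d < f) (hmin : ∀ g, d < g → g < f → τ g ≠ g) :
    Good ((d : ℕ) + 1) (τ * Equiv.swap d f) ∧ (τ * Equiv.swap d f) d = f ∧
      ∀ g : Fin n, (g : ℕ) = d + 1 → (τ * Equiv.swap d f) g ≠ g := by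
  set σ := τ * Equiv.swap d f with hσ
  have sd : σ d = f := by simp [hσ, hf]
  have sf : σ f = d := by simp [hσ, hd]
  have so : ∀ i, i ≠ d → i ≠ f → σ i = τ i := fun i h1 h2 => by
    simp [hσ, Equiv.swap_apply_of_ne_of_ne h1 h2]
  have hne : ∀ i, i ≠ d → i ≠ f → τ i ≠ d ∧ τ i ≠ f := fun i h1 h2 =>
    ⟨fun e => h1 (τ.injective (e.trans hd.symm)), fun e => h2 (τ.injective (e.trans hf.symm))⟩
  have lo : ∀ i, i < d → d < τ i := fun i hi => by
    have h1 := (h.exc i).2 hi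
    have h2 := h.exc (τ i)
    rw [h.inv] at h2
    have := (hne i hi.ne (hi.trans hdf).ne).1
    omega
  have hi : ∀ i, d < i → τ i = i ∨ τ i < d := fun i hi => by
    have h1 := h.exc i
    have h2 := h.exc (τ i)
    rw [h.inv] at h2
    omega
  have mid : ∀ i, d < i → i < f → τ i < d := fun i h1 h2 =>
    (hi i h1).resolve_left (hmin i h1 h2)
  have exc : ∀ i, i < σ i ↔ (i : ℕ) < (d : ℕ) + 1 := fun i => by
    by_cases h1 : i = d
    · subst h1; rw [sd]; omega
    by_cases h2 : i = f
    · subst h2; rw [sf]; omega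
    rw [so i h1 h2, h.exc]; omega
  have inv : ∀ i, σ (σ i) = i := fun i => by
    by_cases h1 : i = d
    · rw [h1, sd, sf]
    by_cases h2 : i = f
    · rw [h2, sf, sd]
    rw [so i h1 h2, so _ (hne i h1 h2).1 (hne i h1 h2).2, h.inv]
  have val : ∀ i, i = d ∧ σ i = f ∨ i = f ∧ σ i = d ∨ i ≠ d ∧ i ≠ f ∧ σ i = τ i := fun i => by
    by_cases h1 : i = d
    · exact .inl ⟨h1, h1 ▸ sd⟩
    by_cases h2 : i = f
    · exact .inr (.inl ⟨h2, h2 ▸ sf⟩)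
    exact .inr (.inr ⟨h1, h2, so i h1 h2⟩)
  refine ⟨⟨inv, ?_, exc, ?_⟩, sd, ?_⟩
  · intro i j k hij hjk hik hkj
    have ej := exc j
    have ti := lo i
    have tj := lo j
    have mi := fun h : d < i ∧ i < f => mid i h.1 h.2
    have mj := fun h : d < j ∧ j < f => mid j h.1 h.2
    have uj := hi j
    have uk := hi k
    have mk := fun h : d < k ∧ k < f => mid k h.1 h.2
    -- Besides `i, j, k`, the triples `i, f, k` and `i, j, f` may carry the pattern in `τ`.
    have avf₁ : ¬ (i < f ∧ f < k ∧ τ i < τ k ∧ τ k < f) := fun ⟨a, b, c, e⟩ =>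
      h.av i f k a b c (by rwa [hf])
    have avf₂ : ¬ (i < j ∧ j < f ∧ τ i < f ∧ f < τ j) := fun ⟨a, b, c, e⟩ =>
      h.av i j f a b (by rwa [hf]) (by rwa [hf])
    have av : ¬ (τ i < τ k ∧ τ k < τ j) := fun ⟨a, b⟩ => h.av i j k hij hjk a b
    rcases val i with ⟨rfl, vi⟩ | ⟨rfl, vi⟩ | ⟨i1, i2, vi⟩ <;>
    rcases val j with ⟨rfl, vj⟩ | ⟨rfl, vj⟩ | ⟨j1, j2, vj⟩ <;>
    rcases val k with ⟨rfl, vk⟩ | ⟨rfl, vk⟩ | ⟨k1, k2, vk⟩ <;>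
    omega
  · have h1 := h.fixCount
    have : ({d, f} : Finset (Fin n)) ⊆ Finset.univ.filter fun i => τ i = i := by
      intro x hx
      simp only [Finset.mem_insert, Finset.mem_singleton] at hx
      rcases hx with rfl | rfl <;> simpa
    have := Finset.card_le_card this
    rw [Finset.card_pair hdf.ne] at this
    change 2 ≤ fixCount τ at this
    omega
  · intro g hg
    by_cases h2 : g = f
    · rw [h2, sf]; exact hdf.ne
    have := mid g
    rw [so g (by omega) h2]
    omega

/-- The converse of `good_join`: dissolving the 2-cycle through the last excedance `d` of `σ`
lowers the degree by one, and the former partner `σ d` is then the fixed point following `d`. -/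
theorem good_split {d : Fin n} {σ : Equiv.Perm (Fin n)} (h : Good ((d : ℕ) + 1) σ)
    (hs : ∀ g : Fin n, (g : ℕ) = d + 1 → σ g ≠ g) :
    d < σ d ∧ Good (d : ℕ) (σ * Equiv.swap d (σ d)) ∧
      (σ * Equiv.swap d (σ d)) d = d ∧ (σ * Equiv.swap d (σ d)) (σ d) = σ d ∧
      ∀ g, d < g → g < σ d → (σ * Equiv.swap d (σ d)) g ≠ g := by
  obtain ⟨f, sd⟩ : ∃ f, σ d = f := ⟨_, rfl⟩
  rw [sd]
  have sf : σ f = d := by rw [← sd, h.inv]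
  have hdf : d < f := by rw [← sd, h.exc]; omega
  set τ := σ * Equiv.swap d f with hτ
  have td : τ d = d := by simp [hτ, sf]
  have tf : τ f = f := by simp [hτ, sd]
  have tu : ∀ i, i ≠ d → i ≠ f → τ i = σ i := fun i h1 h2 => by
    simp [hτ, Equiv.swap_apply_of_ne_of_ne h1 h2]
  have hne : ∀ i, i ≠ d → i ≠ f → σ i ≠ d ∧ σ i ≠ f := fun i h1 h2 =>
    ⟨fun e => h2 (σ.injective (e.trans sf.symm)), fun e => h1 (σ.injective (e.trans sd.symm))⟩
  have lo : ∀ i, i < d → d < σ i := fun i hi => by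
    have h1 := h.exc i
    have h2 := h.exc (σ i)
    rw [h.inv] at h2
    have := (hne i hi.ne (hi.trans hdf).ne).1
    omega
  have hi : ∀ i, d < i → i ≠ f → σ i = i ∨ σ i < d := fun i hi hf => by
    have h1 := h.exc i
    have h2 := h.exc (σ i)
    rw [h.inv] at h2
    have := (hne i hi.ne' hf).1
    omega
  have mid : ∀ i, d < i → i < f → σ i < d := fun i h1 h2 => by
    refine (hi i h1 h2.ne).resolve_left fun h3 => ?_
    -- otherwise the values at `d + 1 < i < f` form the pattern 132
    have hlt : (d : ℕ) + 1 < n := by omega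
    have h4 := hs ⟨d + 1, hlt⟩ rfl
    have h5 := hi ⟨d + 1, hlt⟩ (by simp [Fin.lt_def]) (by rintro rfl; simp [Fin.lt_def] at h2; omega)
    have h6 : (⟨d + 1, hlt⟩ : Fin n) ≠ i := by rintro rfl; exact h4 h3
    have h7 : (⟨d + 1, hlt⟩ : Fin n) < i := lt_of_le_of_ne (by simp [Fin.le_def]; omega) h6
    have h8 := h5.resolve_left h4
    exact h.av _ i f h7 h2 (by rwa [sf]) (by rw [sf, h3]; exact h1)
  have exc : ∀ i, i < τ i ↔ (i : ℕ) < (d : ℕ) := fun i => by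
    by_cases h1 : i = d
    · subst h1; rw [td]; omega
    by_cases h2 : i = f
    · subst h2; rw [tf]; omega
    rw [tu i h1 h2, h.exc]; omega
  have inv : ∀ i, τ (τ i) = i := fun i => by
    by_cases h1 : i = d
    · rw [h1, td, td]
    by_cases h2 : i = f
    · rw [h2, tf, tf]
    rw [tu i h1 h2, tu _ (hne i h1 h2).1 (hne i h1 h2).2, h.inv]
  have val : ∀ i, i = d ∧ τ i = d ∨ i = f ∧ τ i = f ∨ i ≠ d ∧ i ≠ f ∧ τ i = σ i := fun i => by
    by_cases h1 : i = d
    · exact .inl ⟨h1, h1 ▸ td⟩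
    by_cases h2 : i = f
    · exact .inr (.inl ⟨h2, h2 ▸ tf⟩)
    exact .inr (.inr ⟨h1, h2, tu i h1 h2⟩)
  refine ⟨hdf, ⟨inv, ?_, exc, by have := h.le; omega⟩, td, tf, ?_⟩
  · intro i j k hij hjk hik hkj
    have ej := exc j
    have ti := lo i
    have tj := lo j
    have mi := fun h : d < i ∧ i < f => mid i h.1 h.2
    have mj := fun h : d < j ∧ j < f => mid j h.1 h.2
    have uj := fun h : d < j ∧ j ≠ f => hi j h.1 h.2
    have uk := fun h : d < k ∧ k ≠ f => hi k h.1 h.2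
    have mk := fun h : d < k ∧ k < f => mid k h.1 h.2
    -- Besides `i, j, k`, two triples ending at `d` may carry the pattern in `σ`; the first one is
    -- the triple of images of `i, k, f`.
    have av₁ : ¬ (σ i < σ k ∧ σ k < d ∧ i < f ∧ f < k) := fun ⟨a, b, c, e⟩ =>
      h.av (σ i) (σ k) d a b (by rwa [h.inv, sd]) (by rwa [h.inv, sd])
    have av₂ : ¬ (i < j ∧ j < d ∧ σ i < f ∧ f < σ j) := fun ⟨a, b, c, e⟩ =>
      h.av i j d a b (by rwa [sd]) (by rwa [sd])
    have av : ¬ (σ i < σ k ∧ σ k < σ j) := fun ⟨a, b⟩ => h.av i j k hij hjk a b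
    rcases val i with ⟨rfl, vi⟩ | ⟨rfl, vi⟩ | ⟨i1, i2, vi⟩ <;>
    rcases val j with ⟨rfl, vj⟩ | ⟨rfl, vj⟩ | ⟨j1, j2, vj⟩ <;>
    rcases val k with ⟨rfl, vk⟩ | ⟨rfl, vk⟩ | ⟨k1, k2, vk⟩ <;>
    omega
  · intro g h1 h2
    rw [tu g h1.ne' h2.ne]
    exact ((mid g h1 h2).trans h1).ne

/-! ### The recurrence for involutions -/

open Classical in
/-- The 132-avoiding involutions of `Fin n` with `d` excedances. -/
noncomputable def invols (n d : ℕ) : Finset (Equiv.Perm (Fin n)) :=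
  Finset.univ.filter (Good d)

theorem mem_invols {d : ℕ} {π : Equiv.Perm (Fin n)} : π ∈ invols n d ↔ Good d π := by
  simp [invols]

open Classical in
theorem card_fixed (d : Fin (n + 1)) :
    ((invols (n + 1) d).filter fun τ => τ d = d).card = (invols n d).card := by
  symm
  refine Finset.card_bij (fun π _ => ins d π) ?_ ?_ ?_
  · intro π hπ
    rw [Finset.mem_filter, mem_invols]
    exact ⟨good_ins (mem_invols.1 hπ), ins_self d π⟩
  · intro π _ π' _ h
    ext i : 1
    apply Fin.succAbove_right_injective (p := d)
    rw [← ins_succAbove, ← ins_succAbove, h]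
  · intro τ hτ
    rw [Finset.mem_filter, mem_invols] at hτ
    obtain ⟨π, h1, h2⟩ := exists_ins hτ.1 hτ.2
    exact ⟨π, mem_invols.2 h1, h2⟩

open Classical in
theorem card_moved (d d' : Fin n) (hd : (d' : ℕ) = d + 1) (hn : 2 * (d' : ℕ) ≤ n) :
    ((invols n d').filter fun σ => ¬ σ d' = d').card =
      ((invols n d).filter fun τ => τ d = d).card := by
  have hs : ∀ {σ : Equiv.Perm (Fin n)}, σ ∈ ((invols n d').filter fun σ => ¬ σ d' = d') →
      Good ((d : ℕ) + 1) σ ∧ ∀ g : Fin n, (g : ℕ) = d + 1 → σ g ≠ g := by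
    intro σ hσ
    rw [Finset.mem_filter, mem_invols, hd] at hσ
    refine ⟨hσ.1, fun g hg => ?_⟩
    rw [← hd] at hg
    rw [Fin.ext hg]
    exact hσ.2
  refine Finset.card_bij (fun σ _ => σ * Equiv.swap d (σ d)) ?_ ?_ ?_
  · intro σ hσ
    obtain ⟨-, h1, h2, -⟩ := good_split (hs hσ).1 (hs hσ).2
    rw [Finset.mem_filter, mem_invols]
    exact ⟨h1, h2⟩
  · intro σ hσ σ' hσ' h
    -- Both partners of `d` are the fixed point following `d` in the common image.
    obtain ⟨a1, -, -, a2, a3⟩ := good_split (hs hσ).1 (hs hσ).2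
    obtain ⟨b1, -, -, b2, b3⟩ := good_split (hs hσ').1 (hs hσ').2
    have : σ d = σ' d := by
      rcases lt_trichotomy (σ d) (σ' d) with h1 | h1 | h1
      · exact absurd (h ▸ a2) (b3 _ a1 h1)
      · exact h1
      · exact absurd (h ▸ b2) (a3 _ b1 h1)
    rw [this] at h
    exact mul_right_cancel h
  · intro τ hτ
    rw [Finset.mem_filter, mem_invols] at hτ
    obtain ⟨hτ, td⟩ := hτ
    have hfix := hτ.fixCount
    -- There are `n - 2 * d ≥ 2` fixed points, so there is one besides `d`.
    have h2 : 1 < (Finset.univ.filter fun i => τ i = i).card := by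
      change 1 < fixCount τ
      omega
    have hex : ∃ g, d < g ∧ τ g = g := by
      obtain ⟨g, hg, hgd⟩ := Finset.exists_mem_ne h2 d
      have hg : τ g = g := by simpa using hg
      refine ⟨g, lt_of_le_of_ne (not_lt.1 fun h => ?_) hgd.symm, hg⟩
      have := (hτ.exc g).2 h
      exact this.ne' hg
    obtain ⟨f, ⟨hf1, hf2⟩, hmin⟩ := WellFounded.has_min (wellFounded_lt (α := Fin n))
      {g | d < g ∧ τ g = g} hex
    obtain ⟨h3, h4, h5⟩ := good_join hτ td hf2 hf1 fun g h1 h2 h3 => hmin g ⟨h1, h3⟩ h2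
    refine ⟨τ * Equiv.swap d f, ?_, ?_⟩
    · rw [Finset.mem_filter, mem_invols, hd]
      exact ⟨h3, h5 d' hd⟩
    · simp only [h4]
      rw [mul_assoc, Equiv.swap_mul_self, mul_one]

theorem invols_eq_empty {d : ℕ} (h : n < 2 * d) : invols n d = ∅ := by
  refine Finset.eq_empty_of_forall_notMem fun π hπ => ?_
  have := (mem_invols.1 hπ).le
  omega

theorem card_invols_zero (n : ℕ) : (invols (n + 1) 0).card = (invols n 0).card := by
  classical
  have h := card_fixed (0 : Fin (n + 1))
  rw [Fin.val_zero] at h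
  rw [← h]
  congr 1
  refine (Finset.filter_true_of_mem fun τ hτ => ?_).symm
  have hτ := mem_invols.1 hτ
  have h2 := hτ.exc (τ 0)
  rw [hτ.inv] at h2
  exact Fin.le_zero_iff.1 (not_lt.1 fun h => by have := (hτ.exc 0).1 h; omega)

theorem card_invols_succ {d : ℕ} (hd : 2 * (d + 1) ≤ n + 1) :
    (invols (n + 1) (d + 1)).card = (invols n (d + 1)).card + (invols n d).card := by
  classical
  have h1 := card_fixed (⟨d + 1, by omega⟩ : Fin (n + 1))
  have h2 := card_moved (⟨d, by omega⟩ : Fin (n + 1)) ⟨d + 1, by omega⟩ rfl hd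
  rw [card_fixed] at h2
  rw [← h1, ← h2]
  exact (Finset.card_filter_add_card_filter_not _).symm

/-! ### The recurrence for words -/

/-- The number of occurrences of the letter `b` in `w`. -/
def cnt (w : Fin n → Bool) (b : Bool) : ℕ := (Finset.univ.filter fun i => w i = b).card

theorem cnt_add (w : Fin n → Bool) : cnt w true + cnt w false = n := by
  have := Finset.card_filter_add_card_filter_not (s := (Finset.univ : Finset (Fin n)))
    (fun i => w i = true)
  simpa [cnt] using this

theorem cnt_snoc (w : Fin n → Bool) (a b : Bool) :
    cnt (Fin.snoc w a : Fin (n + 1) → Bool) b = cnt w b + if a = b then 1 else 0 := by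
  simp only [cnt, Finset.card_filter, Fin.snoc_castSucc, Fin.snoc_last, Fin.sum_univ_castSucc]

/-- Appending `x` is always allowed, appending `x̄` only if the word has a surplus of `x`. -/
theorem isPrimDyck_snoc (w : Fin n → Bool) (a : Bool) :
    IsPrimDyck (Fin.snoc w a : Fin (n + 1) → Bool) ↔
      IsPrimDyck w ∧ (a = false → cnt w false < cnt w true) := by
  have key : ∀ (m : ℕ) (b : Bool),
      (Finset.univ.filter fun i : Fin (n + 1) => (i : ℕ) < m ∧
        (Fin.snoc w a : Fin (n + 1) → Bool) i = b).card =
      (Finset.univ.filter fun i : Fin n => (i : ℕ) < m ∧ w i = b).card +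
        if n < m ∧ a = b then 1 else 0 := by
    intro m b
    simp only [Finset.card_filter, Fin.snoc_castSucc, Fin.snoc_last, Fin.sum_univ_castSucc,
      Fin.val_castSucc, Fin.val_last]
  have full : ∀ (m : ℕ) (b : Bool), n ≤ m →
      (Finset.univ.filter fun i : Fin n => (i : ℕ) < m ∧ w i = b).card = cnt w b := by
    intro m b hm
    unfold cnt
    congr 1
    ext i
    have := i.2
    simp
    omega
  unfold IsPrimDyck
  simp only [key]
  constructor
  · intro h
    refine ⟨fun m => ?_, ?_⟩
    · by_cases hm : n < m
      · have := h n
        rw [full _ _ le_rfl, full _ _ le_rfl] at this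
        rw [full _ _ hm.le, full _ _ hm.le]
        simpa using this
      · simpa [hm] using h m
    · rintro rfl
      have := h (n + 1)
      rw [full _ _ (by omega), full _ _ (by omega)] at this
      simp at this
      omega
  · rintro ⟨h1, h2⟩ m
    have h3 := h1 m
    by_cases hm : n < m
    · rw [full _ _ hm.le, full _ _ hm.le] at *
      cases a <;> simp [hm] at * <;> omega
    · simpa [hm] using h3

open Classical in
/-- The words of length `n` with `d` letters `x̄`, all of whose prefixes have at least as many `x`
as `x̄`. -/
noncomputable def words (n d : ℕ) : Finset (Fin n → Bool) :=
  Finset.univ.filter fun w => IsPrimDyck w ∧ cnt w false = d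

theorem mem_words {d : ℕ} {w : Fin n → Bool} :
    w ∈ words n d ↔ IsPrimDyck w ∧ cnt w false = d := by
  simp [words]

theorem IsPrimDyck.cnt_le {w : Fin n → Bool} (h : IsPrimDyck w) :
    cnt w false ≤ cnt w true := by
  have := h n
  simp only [Fin.is_lt, true_and] at this
  exact this

theorem words_eq_empty {d : ℕ} (h : n < 2 * d) : words n d = ∅ := by
  refine Finset.eq_empty_of_forall_notMem fun w hw => ?_
  rw [mem_words] at hw
  have := hw.1.cnt_le
  have := cnt_add w
  omega

theorem card_words_true (n d : ℕ) :
    ((words (n + 1) d).filter fun w => w (Fin.last n) = true).card = (words n d).card := by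
  refine Finset.card_nbij' (fun w => Fin.init w) (fun w => Fin.snoc w true) ?_ ?_ ?_ ?_
  · intro w hw
    simp only [Finset.coe_filter, Set.mem_ofPred_eq] at hw
    rw [← Fin.snoc_init_self w, mem_words, isPrimDyck_snoc, cnt_snoc, Fin.snoc_last] at hw
    simp only [Finset.mem_coe, mem_words]
    simpa [hw.2, hw.1.1.1] using hw.1.2
  · intro w hw
    simp only [Finset.mem_coe, mem_words] at hw
    simp [mem_words, isPrimDyck_snoc, cnt_snoc, hw.1, hw.2]
  · intro w hw
    simp only [Finset.coe_filter, Set.mem_ofPred_eq] at hw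
    simp only [← hw.2, Fin.snoc_init_self]
  · intro w _
    simp

theorem card_words_false {n d : ℕ} (hd : 2 * (d + 1) ≤ n + 1) :
    ((words (n + 1) (d + 1)).filter fun w => ¬ w (Fin.last n) = true).card =
      (words n d).card := by
  refine Finset.card_nbij' (fun w => Fin.init w) (fun w => Fin.snoc w false) ?_ ?_ ?_ ?_
  · intro w hw
    simp only [Finset.coe_filter, Set.mem_ofPred_eq, Bool.not_eq_true] at hw
    rw [← Fin.snoc_init_self w, mem_words, isPrimDyck_snoc, cnt_snoc, Fin.snoc_last] at hw
    simp only [Finset.mem_coe, mem_words]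
    simpa [hw.2, hw.1.1.1] using hw.1.2
  · intro w hw
    simp only [Finset.mem_coe, mem_words] at hw
    have := cnt_add w
    simp [mem_words, isPrimDyck_snoc, cnt_snoc, hw.1, hw.2]
    omega
  · intro w hw
    simp only [Finset.coe_filter, Set.mem_ofPred_eq, Bool.not_eq_true] at hw
    simp only [← hw.2, Fin.snoc_init_self]
  · intro w _
    simp

theorem card_words_zero (n : ℕ) : (words (n + 1) 0).card = (words n 0).card := by
  rw [← card_words_true n 0]
  congr 1
  refine (Finset.filter_true_of_mem fun w hw => ?_).symm
  have h := (mem_words.1 hw).2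
  rw [cnt, Finset.card_eq_zero, Finset.filter_eq_empty_iff] at h
  simpa using h (Finset.mem_univ (Fin.last n))

theorem card_words_succ {d : ℕ} (hd : 2 * (d + 1) ≤ n + 1) :
    (words (n + 1) (d + 1)).card = (words n (d + 1)).card + (words n d).card := by
  rw [← card_words_true n (d + 1), ← card_words_false hd]
  exact (Finset.card_filter_add_card_filter_not fun w : Fin (n + 1) → Bool =>
    w (Fin.last n) = true).symm

/-! ### The bijection -/

theorem card_eq (n d : ℕ) : (invols n d).card = (words n d).card := by
  induction n generalizing d with
  | zero =>
    rcases Nat.eq_zero_or_pos d with rfl | hd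
    · have h1 : invols 0 0 = Finset.univ := by
        ext π
        simp only [mem_invols, Finset.mem_univ, iff_true]
        exact ⟨fun i => i.elim0, fun i => i.elim0, fun i => i.elim0, le_rfl⟩
      have h2 : words 0 0 = Finset.univ := by
        ext w
        simp only [mem_words, Finset.mem_univ, iff_true]
        exact ⟨fun m => by simp, by simp [cnt]⟩
      rw [h1, h2]
      simp
    · rw [invols_eq_empty (by omega), words_eq_empty (by omega)]; rfl
  | succ n ih =>
    cases d with
    | zero => rw [card_invols_zero, card_words_zero, ih]
    | succ d =>
      by_cases hd : 2 * (d + 1) ≤ n + 1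
      · rw [card_invols_succ hd, card_words_succ hd, ih, ih]
      · rw [invols_eq_empty (by omega), words_eq_empty (by omega)]; rfl

end

theorem stmt3 (n : ℕ) :
    ∃ e : {π : Equiv.Perm (Fin n) // IsInvolution π ∧ Avoids132 π} ≃
          {w : Fin n → Bool // IsPrimDyck w},
      ∀ π : {π : Equiv.Perm (Fin n) // IsInvolution π ∧ Avoids132 π},
        fixCount π.1 =
          (Finset.univ.filter fun i : Fin n => (e π).1 i = true).card -
          (Finset.univ.filter fun i : Fin n => (e π).1 i = false).card := by
  classical
  let exc : {π : Equiv.Perm (Fin n) // IsInvolution π ∧ Avoids132 π} → ℕ :=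
    fun π => (Finset.univ.filter fun i => i < π.1 i).card
  let bars : {w : Fin n → Bool // IsPrimDyck w} → ℕ := fun w => cnt w.1 false
  have fib : ∀ d, Nonempty ({π // exc π = d} ≃ {w // bars w = d}) := by
    intro d
    have e₁ : {π // exc π = d} ≃ invols n d :=
      (Equiv.subtypeSubtypeEquivSubtypeInter _ fun π : Equiv.Perm (Fin n) =>
        (Finset.univ.filter fun i => i < π i).card = d).trans
        (Equiv.subtypeEquivRight fun π => by rw [mem_invols, good_iff])
    have e₂ : {w // bars w = d} ≃ words n d :=
      (Equiv.subtypeSubtypeEquivSubtypeInter _ fun w : Fin n → Bool => cnt w false = d).trans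
        (Equiv.subtypeEquivRight fun w => mem_words.symm)
    exact ⟨e₁.trans ((Finset.equivOfCardEq (card_eq n d)).trans e₂.symm)⟩
  refine ⟨Equiv.ofFiberEquiv fun d => (fib d).some, fun π => ?_⟩
  have h1 : bars _ = exc π := Equiv.ofFiberEquiv_map (fun d => (fib d).some) π
  have h2 := fixCount_add π.2.1
  have h3 := cnt_add (Equiv.ofFiberEquiv (fun d => (fib d).some) π).1
  change cnt (Equiv.ofFiberEquiv (fun d => (fib d).some) π).1 false = _ at h1
  simp only [cnt, exc] at h1 h3
  generalize (Equiv.ofFiberEquiv (fun d => (fib d).some) π) = w at *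
  omega
end

section
/- For every k ≥ 3 and every n, the number of involutions of length n avoiding both 132 and the identity pattern 12…k equals the number of involutions of length n avoiding both 132 and the pattern 2134…k (i.e., 12…k with the first two entries swapped). Moreover, the bijection preserves the number of fixed points p for all 0 ≤ p ≤ k−3. -/
def ContainsPat {n k : ℕ} (π : Equiv.Perm (Fin n)) (τ : Fin k → Fin k) : Prop :=
  ∃ f : Fin k → Fin n, StrictMono f ∧ ∀ a b : Fin k, τ a < τ b ↔ π (f a) < π (f b)

def pat2134 (k : ℕ) : Fin k → Fin k := fun i =>
  if (i : ℕ) = 0 then ⟨1 % k, Nat.mod_lt 1 i.pos⟩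
  else if (i : ℕ) = 1 then ⟨0, i.pos⟩
  else i

open Equiv

/-! ### Direct and skew sums of permutations -/

/-- The direct sum `A ⊕ 1`: `A` followed by a new largest entry. -/
def addTop {n : ℕ} (A : Perm (Fin n)) : Perm (Fin (n + 1)) :=
  finSumFinEquiv.symm.trans ((Equiv.sumCongr A (Equiv.refl (Fin 1))).trans finSumFinEquiv)

/-- The skew sum `A ⊖ B`: a copy of `A`, shifted above all values of `B`, followed by `B`. -/
def skewSum {a b : ℕ} (A : Perm (Fin a)) (B : Perm (Fin b)) : Perm (Fin (a + b)) :=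
  finSumFinEquiv.symm.trans ((Equiv.sumCongr A B).trans
    ((Equiv.sumComm _ _).trans (finSumFinEquiv.trans (finCongr (Nat.add_comm b a)))))

/-- `π` avoids both 132 and `τ`. -/
def Good_s8 {n k : ℕ} (τ : Perm (Fin k)) (π : Perm (Fin n)) : Prop :=
  Avoids132 π ∧ ¬ ContainsPat π τ

section Basic
variable {n a b m : ℕ}

@[simp] lemma addTop_castSucc (A : Perm (Fin n)) (i : Fin n) :
    addTop A i.castSucc = (A i).castSucc := by
  have : i.castSucc = Fin.castAdd 1 i := rfl
  rw [this]
  simp only [addTop, Equiv.trans_apply, finSumFinEquiv_symm_apply_castAdd]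
  simp
  rfl

@[simp] lemma addTop_last (A : Perm (Fin n)) : addTop A (Fin.last n) = Fin.last n := by
  have : Fin.last n = Fin.natAdd n (0 : Fin 1) := rfl
  rw [this]
  simp only [addTop, Equiv.trans_apply, finSumFinEquiv_symm_apply_natAdd]
  simp

@[simp] lemma skewSum_castAdd (A : Perm (Fin a)) (B : Perm (Fin b)) (i : Fin a) :
    (skewSum A B (Fin.castAdd b i) : ℕ) = b + A i := by
  simp [skewSum, Nat.add_comm]

@[simp] lemma skewSum_natAdd (A : Perm (Fin a)) (B : Perm (Fin b)) (j : Fin b) :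
    (skewSum A B (Fin.natAdd a j) : ℕ) = B j := by
  simp [skewSum]

lemma addTop_inj {A A' : Perm (Fin n)} (h : addTop A = addTop A') : A = A' := by
  ext i
  have := congrArg (fun π => (π i.castSucc : ℕ)) h
  simpa using this

lemma skewSum_inj {A A' : Perm (Fin a)} {B B' : Perm (Fin b)}
    (h : skewSum A B = skewSum A' B') : A = A' ∧ B = B' := by
  constructor
  · ext i
    have := congrArg (fun π => (π (Fin.castAdd b i) : ℕ)) h
    simpa using this
  · ext i
    have := congrArg (fun π => (π (Fin.natAdd a i) : ℕ)) h
    simpa using this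

lemma exists_addTop {π : Perm (Fin (n + 1))} (h : π (Fin.last n) = Fin.last n) :
    ∃ A, π = addTop A := by
  have hne : ∀ i : Fin n, π i.castSucc ≠ Fin.last n := fun i hi =>
    (Fin.castSucc_lt_last i).ne (π.injective (hi.trans h.symm))
  let f : Fin n → Fin n := fun i => (π i.castSucc).castPred (hne i)
  have hf : Function.Injective f := by
    intro i j hij
    simpa [f] using hij
  refine ⟨Equiv.ofBijective f (Finite.injective_iff_bijective.mp hf), ?_⟩
  ext i
  refine Fin.lastCases ?_ (fun i => ?_) i
  · simp [h]
  · simp [f]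

/-- If every entry in the first `a` positions exceeds every later one, then by counting the first
`a` entries are exactly the `a` largest values. -/
lemma exists_skewSum {π : Perm (Fin (a + b))}
    (h : ∀ (i : Fin a) (j : Fin b), π (Fin.natAdd a j) < π (Fin.castAdd b i)) :
    ∃ A B, π = skewSum A B := by
  have h1 : ∀ i : Fin a, b ≤ (π (Fin.castAdd b i) : ℕ) := by
    intro i
    have := Fintype.card_le_of_injective
      (fun j : Fin b => (⟨π (Fin.natAdd a j), h i j⟩ : Fin (π (Fin.castAdd b i) : ℕ)))
      (by intro j j' hj
          simp only [Fin.mk.injEq] at hj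
          simpa using π.injective (Fin.ext hj))
    simpa using this
  have h2 : ∀ j : Fin b, (π (Fin.natAdd a j) : ℕ) < b := by
    intro j
    have := Fintype.card_le_of_injective
      (fun i : Fin a => (⟨a + b - 1 - π (Fin.castAdd b i), by
          have := h i j; have := (π (Fin.castAdd b i)).2; omega⟩ :
            Fin (a + b - 1 - (π (Fin.natAdd a j) : ℕ))))
      (by intro i i' hi
          simp only [Fin.mk.injEq] at hi
          have := (π (Fin.castAdd b i)).2
          have := (π (Fin.castAdd b i')).2
          simpa using π.injective (a₁ := Fin.castAdd b i) (a₂ := Fin.castAdd b i')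
            (Fin.ext (by omega)))
    simp only [Fintype.card_fin] at this
    have := j.2
    omega
  let f : Fin a → Fin a := fun i => ⟨π (Fin.castAdd b i) - b, by
    have := h1 i; have := (π (Fin.castAdd b i)).2; omega⟩
  let g : Fin b → Fin b := fun j => ⟨π (Fin.natAdd a j), h2 j⟩
  have hf : Function.Injective f := by
    intro i i' hi
    simp only [f, Fin.mk.injEq] at hi
    have := h1 i
    have := h1 i'
    simpa using π.injective (a₁ := Fin.castAdd b i) (a₂ := Fin.castAdd b i') (Fin.ext (by omega))
  have hg : Function.Injective g := by
    intro i i' hi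
    simp only [g, Fin.mk.injEq] at hi
    simpa using π.injective (Fin.ext hi)
  refine ⟨Equiv.ofBijective f (Finite.injective_iff_bijective.mp hf),
    Equiv.ofBijective g (Finite.injective_iff_bijective.mp hg), ?_⟩
  ext i
  refine Fin.addCases (fun i => ?_) (fun i => ?_) i
  · have := h1 i
    simp [f]
    omega
  · simp [g]

lemma addTop_inv (A : Perm (Fin n)) : (addTop A)⁻¹ = addTop A⁻¹ := by
  rw [inv_eq_iff_mul_eq_one]
  ext i
  refine Fin.lastCases ?_ (fun i => ?_) i <;> simp

lemma isInvolution_addTop {A : Perm (Fin n)} : IsInvolution (addTop A) ↔ IsInvolution A := by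
  constructor
  · intro h i
    simpa using h i.castSucc
  · intro h i
    refine Fin.lastCases ?_ (fun i => ?_) i
    · simp
    · simp [h i]

/-- `P ⊖ B ⊖ P⁻¹` is an involution exactly when `B` is. -/
lemma isInvolution_skewSum {P : Perm (Fin a)} {B : Perm (Fin b)} :
    IsInvolution (skewSum P (skewSum B P⁻¹)) ↔ IsInvolution B := by
  have e1 : ∀ i, skewSum P (skewSum B P⁻¹) (Fin.castAdd _ i) = Fin.natAdd a (Fin.natAdd b (P i)) :=
    fun i => Fin.ext (by simp; omega)
  have e2 : ∀ i, skewSum P (skewSum B P⁻¹) (Fin.natAdd a (Fin.castAdd a i)) =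
      Fin.natAdd a (Fin.castAdd a (B i)) :=
    fun i => Fin.ext (by simp)
  have e3 : ∀ i, skewSum P (skewSum B P⁻¹) (Fin.natAdd a (Fin.natAdd b i)) =
      Fin.castAdd _ (P⁻¹ i) :=
    fun i => Fin.ext (by simp)
  constructor
  · intro h i
    have := h (Fin.natAdd a (Fin.castAdd a i))
    rw [e2, e2] at this
    simpa using this
  · intro h i
    refine Fin.addCases (fun i => ?_) (fun i => Fin.addCases (fun i => ?_) (fun i => ?_) i) i
    · rw [e1, e3]; simp
    · rw [e2, e2, h i]
    · rw [e3, e1]; simp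

lemma fixCount_eq_sum (π : Perm (Fin n)) : fixCount π = ∑ i, if π i = i then 1 else 0 := by
  rw [fixCount, Finset.card_filter]

lemma fixCount_addTop (A : Perm (Fin n)) : fixCount (addTop A) = fixCount A + 1 := by
  simp only [fixCount_eq_sum, Fin.sum_univ_castSucc]
  simp

lemma fixCount_skewSum (P : Perm (Fin a)) (B : Perm (Fin b)) :
    fixCount (skewSum P (skewSum B P⁻¹)) = fixCount B := by
  simp only [fixCount_eq_sum, Fin.sum_univ_add, Fin.ext_iff, skewSum_castAdd, skewSum_natAdd,
    Fin.val_castAdd, Fin.val_natAdd]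
  have h1 : ∀ i : Fin a, ¬ (b + a + (P i : ℕ) = i) := fun i => by omega
  have h2 : ∀ i : Fin a, ¬ ((P⁻¹ i : ℕ) = a + (b + i)) := fun i => by omega
  have h3 : ∀ i : Fin b, (a + (B i : ℕ) = a + i) ↔ ((B i : ℕ) = i) := fun i => by omega
  simp only [h1, h2, h3]
  simp

/-! ### Pattern avoidance in sums -/

lemma avoids132_addTop {A : Perm (Fin n)} : Avoids132 (addTop A) ↔ Avoids132 A := by
  refine not_congr ⟨?_, ?_⟩
  · rintro ⟨i, j, k, hij, hjk, h1, h2⟩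
    induction k using Fin.lastCases with
    | last => exact absurd (Fin.le_last _) (not_le.mpr (by simpa using h2))
    | cast k =>
      induction j using Fin.lastCases with
      | last => exact absurd (Fin.le_last _) (not_le.mpr hjk)
      | cast j =>
        induction i using Fin.lastCases with
        | last => exact absurd (Fin.le_last _) (not_le.mpr hij)
        | cast i => exact ⟨i, j, k, by simpa using hij, by simpa using hjk, by simpa using h1,
            by simpa using h2⟩
  · rintro ⟨i, j, k, hij, hjk, h1, h2⟩
    exact ⟨i.castSucc, j.castSucc, k.castSucc, by simpa, by simpa, by simpa, by simpa⟩

lemma avoids132_inv {A : Perm (Fin n)} (h : Avoids132 A) : Avoids132 A⁻¹ := by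
  rintro ⟨i, j, k, hij, hjk, h1, h2⟩
  exact h ⟨A⁻¹ i, A⁻¹ k, A⁻¹ j, h1, h2, by simpa using hij, by simpa using hjk⟩

lemma avoids132_skewSum {A : Perm (Fin a)} {B : Perm (Fin b)} :
    Avoids132 (skewSum A B) ↔ Avoids132 A ∧ Avoids132 B := by
  constructor
  · intro h
    constructor
    · rintro ⟨i, j, k, hij, hjk, h1, h2⟩
      refine h ⟨Fin.castAdd b i, Fin.castAdd b j, Fin.castAdd b k, ?_, ?_, ?_, ?_⟩ <;>
        simp only [Fin.lt_def, Fin.val_castAdd, skewSum_castAdd] at * <;> omega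
    · rintro ⟨i, j, k, hij, hjk, h1, h2⟩
      refine h ⟨Fin.natAdd a i, Fin.natAdd a j, Fin.natAdd a k, ?_, ?_, ?_, ?_⟩ <;>
        simp only [Fin.lt_def, Fin.val_natAdd, skewSum_natAdd] at * <;> omega
  · rintro ⟨hA, hB⟩ ⟨i, j, k, hij, hjk, h1, h2⟩
    induction i using Fin.addCases with
    | left i =>
      induction k using Fin.addCases with
      | left k =>
        induction j using Fin.addCases with
        | left j =>
          refine hA ⟨i, j, k, ?_, ?_, ?_, ?_⟩ <;>
            simp only [Fin.lt_def, Fin.val_castAdd, skewSum_castAdd] at * <;> omega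
        | right j =>
          simp only [Fin.lt_def, Fin.val_castAdd, Fin.val_natAdd] at hjk; omega
      | right k =>
        simp only [Fin.lt_def, skewSum_castAdd, skewSum_natAdd] at h1; omega
    | right i =>
      induction j using Fin.addCases with
      | left j => simp only [Fin.lt_def, Fin.val_castAdd, Fin.val_natAdd] at hij; omega
      | right j =>
        induction k using Fin.addCases with
        | left k => simp only [Fin.lt_def, Fin.val_castAdd, Fin.val_natAdd] at hjk; omega
        | right k =>
          refine hB ⟨i, j, k, ?_, ?_, ?_, ?_⟩ <;>
            simp only [Fin.lt_def, Fin.val_natAdd, skewSum_natAdd] at * <;> omega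

lemma containsPat_addTop {A : Perm (Fin n)} {τ : Perm (Fin m)} :
    ContainsPat (addTop A) (addTop τ) ↔ ContainsPat A τ := by
  constructor
  · rintro ⟨f, hf, h⟩
    have hne : ∀ i : Fin m, f i.castSucc ≠ Fin.last n := fun i =>
      ((hf (Fin.castSucc_lt_last i)).trans_le (Fin.le_last _)).ne
    have hc : ∀ i : Fin m, f i.castSucc = ((f i.castSucc).castPred (hne i)).castSucc :=
      fun i => by simp
    refine ⟨fun i => (f i.castSucc).castPred (hne i), ?_, ?_⟩
    · intro i j hij
      have := hf (Fin.castSucc_lt_castSucc_iff.mpr hij)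
      simpa using this
    · intro i j
      have := h i.castSucc j.castSucc
      rw [hc i, hc j] at this
      simpa only [addTop_castSucc, Fin.castSucc_lt_castSucc_iff] using this
  · rintro ⟨f, hf, h⟩
    refine ⟨Fin.lastCases (Fin.last n) (fun i => (f i).castSucc), ?_, ?_⟩
    · intro i j hij
      induction j using Fin.lastCases with
      | last =>
        induction i using Fin.lastCases with
        | last => simp at hij
        | cast i => simp
      | cast j =>
        induction i using Fin.lastCases with
        | last => exact absurd (Fin.le_last _) (not_le.mpr hij)
        | cast i => simpa using hf (by simpa using hij)
    · intro i j
      induction j using Fin.lastCases with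
      | last =>
        induction i using Fin.lastCases with
        | last => simp
        | cast i => simp [Fin.castSucc_lt_last]
      | cast j =>
        induction i using Fin.lastCases with
        | last =>
          simp only [addTop_castSucc, addTop_last, Fin.lastCases_last, Fin.lastCases_castSucc]
          exact iff_of_false (Fin.le_last _).not_gt (Fin.le_last _).not_gt
        | cast i => simpa using h i j

lemma containsPat_inv {A : Perm (Fin n)} {τ : Perm (Fin m)} (hτ : IsInvolution τ)
    (h : ContainsPat A τ) : ContainsPat A⁻¹ τ := by
  obtain ⟨f, hf, h⟩ := h
  refine ⟨fun i => A (f (τ i)), ?_, ?_⟩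
  · intro i j hij
    rw [← h, hτ, hτ]
    exact hij
  · intro i j
    simp [hf.lt_iff_lt]

/-- Since `τ` is nonempty, the first entry of `τ ⊕ 1` is smaller than its last, so this pattern
cannot straddle a skew sum. -/
lemma containsPat_skewSum {A : Perm (Fin a)} {B : Perm (Fin b)} {τ : Perm (Fin (m + 1))} :
    ContainsPat (skewSum A B) (addTop τ) ↔
      ContainsPat A (addTop τ) ∨ ContainsPat B (addTop τ) := by
  constructor
  · rintro ⟨f, hf, h⟩
    by_cases hl : (f (Fin.last _) : ℕ) < a
    · left
      have hi : ∀ i, (f i : ℕ) < a := fun i =>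
        lt_of_le_of_lt (hf.monotone (Fin.le_last i)) hl
      have hc : ∀ i, f i = Fin.castAdd b ⟨f i, hi i⟩ := fun i => Fin.ext rfl
      refine ⟨fun i => ⟨f i, hi i⟩, fun i j hij => hf hij, fun i j => ?_⟩
      rw [h i j, hc i, hc j, Fin.lt_def, Fin.lt_def, skewSum_castAdd, skewSum_castAdd]
      exact Nat.add_lt_add_iff_left
    · have h0 : ¬ (f 0 : ℕ) < a := by
        intro h0
        have hlt : addTop τ 0 < addTop τ (Fin.last _) := by
          have : (0 : Fin (m + 1 + 1)) = (0 : Fin (m + 1)).castSucc := rfl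
          rw [this, addTop_castSucc, addTop_last]
          exact Fin.castSucc_lt_last _
        rw [h] at hlt
        have e0 : f 0 = Fin.castAdd b ⟨f 0, h0⟩ := Fin.ext rfl
        have e1 : f (Fin.last _) = Fin.natAdd a
            ⟨f (Fin.last _) - a, by have := (f (Fin.last _)).2; omega⟩ :=
          Fin.ext (by simp; omega)
        rw [e0, e1, Fin.lt_def, skewSum_castAdd, skewSum_natAdd] at hlt
        omega
      right
      have hi : ∀ i, a ≤ (f i : ℕ) := fun i =>
        (not_lt.mp h0).trans (hf.monotone (Fin.zero_le i))
      have hc : ∀ i, f i = Fin.natAdd a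
          ⟨f i - a, by have := (f i).2; have := hi i; omega⟩ := fun i =>
        Fin.ext (by have := hi i; simp; omega)
      refine ⟨fun i => ⟨f i - a, by have := (f i).2; have := hi i; omega⟩,
        fun i j hij => ?_, fun i j => ?_⟩
      · have h1 := hf hij
        have h2 := hi i
        simp only [Fin.lt_def] at h1 ⊢
        omega
      · rw [h i j, hc i, hc j, Fin.lt_def, Fin.lt_def, skewSum_natAdd, skewSum_natAdd]
  · rintro (⟨f, hf, h⟩ | ⟨f, hf, h⟩)
    · refine ⟨fun i => Fin.castAdd b (f i), fun i j hij => hf hij, fun i j => ?_⟩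
      rw [h i j, Fin.lt_def, Fin.lt_def, skewSum_castAdd, skewSum_castAdd]
      exact Nat.add_lt_add_iff_left.symm
    · refine ⟨fun i => Fin.natAdd a (f i), fun i j hij => ?_, fun i j => ?_⟩
      · simpa using hf hij
      · rw [h i j, Fin.lt_def, Fin.lt_def, skewSum_natAdd, skewSum_natAdd]

lemma good_addTop {A : Perm (Fin n)} {τ : Perm (Fin m)} :
    Good_s8 (addTop τ) (addTop A) ↔ Good_s8 τ A := by
  rw [Good_s8, Good_s8, avoids132_addTop, containsPat_addTop]

lemma good_skewSum {A : Perm (Fin a)} {B : Perm (Fin b)} {τ : Perm (Fin (m + 1))} :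
    Good_s8 (addTop τ) (skewSum A B) ↔ Good_s8 (addTop τ) A ∧ Good_s8 (addTop τ) B := by
  rw [Good_s8, Good_s8, Good_s8, avoids132_skewSum, containsPat_skewSum]
  tauto

lemma good_inv {A : Perm (Fin n)} {τ : Perm (Fin m)} (hτ : IsInvolution τ) :
    Good_s8 τ A⁻¹ ↔ Good_s8 τ A := by
  have key : ∀ A : Perm (Fin n), Good_s8 τ A → Good_s8 τ A⁻¹ := fun A h =>
    ⟨avoids132_inv h.1, fun hc => h.2 (by simpa using containsPat_inv hτ hc)⟩
  exact ⟨fun h => by simpa using key _ h, key A⟩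

/-! ### Decomposition at the maximum -/

/-- A 132-avoiding permutation whose maximum is at position `a` is `(A ⊕ 1) ⊖ B`, because every
entry before the maximum exceeds every entry after it. -/
lemma exists_decomp {π : Perm (Fin (a + 1 + b))} (h : Avoids132 π)
    (hx : (π (Fin.castAdd b (Fin.last a)) : ℕ) + 1 = a + 1 + b) :
    ∃ A B, π = skewSum (addTop A) B := by
  have hmax : ∀ y, y ≠ Fin.castAdd b (Fin.last a) →
      π y < π (Fin.castAdd b (Fin.last a)) := by
    intro y hy
    have h1 : (π y : ℕ) ≠ π (Fin.castAdd b (Fin.last a)) := fun e => hy (π.injective (Fin.ext e))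
    have := (π y).2
    rw [Fin.lt_def]
    omega
  obtain ⟨P, B, rfl⟩ : ∃ P B, π = skewSum P B := by
    apply exists_skewSum
    intro i j
    have hj : Fin.natAdd (a + 1) j ≠ Fin.castAdd b (Fin.last a) := by
      simp [Fin.ext_iff]; omega
    induction i using Fin.lastCases with
    | last => exact hmax _ hj
    | cast i =>
      by_contra hlt
      refine h ⟨_, Fin.castAdd b (Fin.last a), Fin.natAdd (a + 1) j, ?_, ?_,
        lt_of_le_of_ne (not_lt.mp hlt) ?_, hmax _ hj⟩
      · simp [Fin.lt_def]
      · simp [Fin.lt_def]; omega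
      · intro e
        have := congrArg Fin.val (π.injective e)
        simp at this
        omega
  rw [skewSum_castAdd] at hx
  obtain ⟨A, rfl⟩ := exists_addTop (π := P) (Fin.ext (by simp; omega))
  exact ⟨A, B, rfl⟩

/-- In an involution of the form `P ⊖ B'` with `|B'| ≥ |P|`, the inverse of `P` has to occupy the
last positions. -/
lemma exists_decomp_invol {P : Perm (Fin a)} {B' : Perm (Fin (b + a))}
    (h : IsInvolution (skewSum P B')) : ∃ B, B' = skewSum B P⁻¹ := by
  have hlast : ∀ j : Fin a, (B' (Fin.natAdd b j) : ℕ) = P⁻¹ j := by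
    intro j
    have h1 := h (Fin.castAdd _ (P⁻¹ j))
    have h2 : skewSum P B' (Fin.castAdd _ (P⁻¹ j)) = Fin.natAdd a (Fin.natAdd b j) :=
      Fin.ext (by simp; omega)
    rw [h2] at h1
    have := congrArg Fin.val h1
    simpa using this
  obtain ⟨B, C, rfl⟩ : ∃ B C, B' = skewSum B C := by
    apply exists_skewSum
    intro i j
    rw [Fin.lt_def, hlast]
    refine lt_of_lt_of_le (P⁻¹ j).2 (not_lt.mp fun hv => ?_)
    have h1 := h (Fin.natAdd a (Fin.castAdd a i))
    have h2 : skewSum P B' (Fin.natAdd a (Fin.castAdd a i)) =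
        Fin.castAdd _ ⟨B' (Fin.castAdd a i), hv⟩ := Fin.ext (by simp)
    rw [h2] at h1
    have := congrArg Fin.val h1
    simp only [skewSum_castAdd, Fin.val_natAdd, Fin.val_castAdd] at this
    omega
  refine ⟨B, ?_⟩
  congr 1
  ext j
  simpa using hlast j

end Basic

/-! ### Recursions for the counts -/

section Counting
variable {a b m : ℕ}

/-- Counting permutations by the position `x` of their maximum. -/
lemma card_eq_sum_fiber {N : ℕ} (R : Perm (Fin (N + 1)) → Prop) :
    Nat.card {π // R π} =
      ∑ x : Fin (N + 1), Nat.card {π : Perm (Fin (N + 1)) // R π ∧ (π x : ℕ) + 1 = N + 1} := by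
  classical
  rw [← Nat.card_sigma]
  refine Nat.card_congr
    { toFun := fun π => ⟨π.1⁻¹ (Fin.last N), π.1, π.2, by simp⟩
      invFun := fun s => ⟨s.2.1, s.2.2.1⟩
      left_inv := fun π => rfl
      right_inv := ?_ }
  rintro ⟨x, π, hR, hx⟩
  have : π⁻¹ (Fin.last N) = x := by
    rw [Perm.inv_eq_iff_eq]
    exact Fin.ext (by simp; omega)
  subst this
  rfl

lemma card_fiber_perm (τ : Perm (Fin (m + 1))) {N : ℕ} (hN : N = a + 1 + b) (x : Fin N)
    (hx : x.val = a) :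
    Nat.card {π : Perm (Fin N) // Good_s8 (addTop τ) π ∧ (π x : ℕ) + 1 = N} =
      Nat.card {A : Perm (Fin a) // Good_s8 τ A} *
        Nat.card {B : Perm (Fin b) // Good_s8 (addTop τ) B} := by
  subst hN
  obtain rfl : x = Fin.castAdd b (Fin.last a) := Fin.ext (by simpa using hx)
  rw [← Nat.card_prod]
  symm
  refine Nat.card_eq_of_bijective (fun p => ⟨skewSum (addTop p.1.1) p.2.1,
    good_skewSum.mpr ⟨good_addTop.mpr p.1.2, p.2.2⟩, by simp; omega⟩) ⟨?_, ?_⟩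
  · rintro ⟨⟨A, hA⟩, B, hB⟩ ⟨⟨A', hA'⟩, B', hB'⟩ h
    obtain ⟨h1, rfl⟩ := skewSum_inj (Subtype.ext_iff.mp h)
    obtain rfl := addTop_inj h1
    rfl
  · rintro ⟨π, hg, hx⟩
    obtain ⟨A, B, rfl⟩ := exists_decomp hg.1 hx
    rw [good_skewSum, good_addTop] at hg
    exact ⟨⟨⟨A, hg.1⟩, B, hg.2⟩, rfl⟩

/-- Involutions fixing the last position are `A ⊕ 1`; this lowers the pattern and the number of
fixed points by one. -/
lemma card_fiber_invol_last (τ : Perm (Fin (m + 1))) (Q : ℕ → Prop) {N : ℕ} (hN : N = a + 1)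
    (x : Fin N) (hx : x.val = a) :
    Nat.card {π : Perm (Fin N) //
        (IsInvolution π ∧ Good_s8 (addTop τ) π ∧ Q (fixCount π)) ∧ (π x : ℕ) + 1 = N} =
      Nat.card {A : Perm (Fin a) // IsInvolution A ∧ Good_s8 τ A ∧ Q (fixCount A + 1)} := by
  subst hN
  obtain rfl : x = Fin.last a := Fin.ext (by simpa using hx)
  symm
  refine Nat.card_eq_of_bijective (fun p => ⟨addTop p.1,
    ⟨isInvolution_addTop.mpr p.2.1, good_addTop.mpr p.2.2.1, by
      rw [fixCount_addTop]; exact p.2.2.2⟩, by simp⟩) ⟨?_, ?_⟩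
  · rintro ⟨A, hA⟩ ⟨A', hA'⟩ h
    obtain rfl := addTop_inj (Subtype.ext_iff.mp h)
    rfl
  · rintro ⟨π, ⟨hi, hg, hQ⟩, hx⟩
    obtain ⟨A, rfl⟩ := exists_addTop (π := π) (Fin.ext (by simp; omega))
    rw [good_addTop] at hg
    rw [isInvolution_addTop] at hi
    rw [fixCount_addTop] at hQ
    exact ⟨⟨A, hi, hg, hQ⟩, rfl⟩

lemma card_fiber_invol_mid {τ : Perm (Fin (m + 1))} (hτ : IsInvolution τ) (Q : ℕ → Prop) {N : ℕ}
    (hN : N = a + 1 + (b + (a + 1))) (x : Fin N) (hx : x.val = a) :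
    Nat.card {π : Perm (Fin N) //
        (IsInvolution π ∧ Good_s8 (addTop τ) π ∧ Q (fixCount π)) ∧ (π x : ℕ) + 1 = N} =
      Nat.card {A : Perm (Fin a) // Good_s8 τ A} *
        Nat.card {B : Perm (Fin b) // IsInvolution B ∧ Good_s8 (addTop τ) B ∧ Q (fixCount B)} := by
  subst hN
  obtain rfl : x = Fin.castAdd _ (Fin.last a) := Fin.ext (by simpa using hx)
  rw [← Nat.card_prod]
  symm
  refine Nat.card_eq_of_bijective
    (fun p => ⟨skewSum (addTop p.1.1) (skewSum p.2.1 (addTop p.1.1)⁻¹),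
    ⟨isInvolution_skewSum.mpr p.2.2.1, ?_, ?_⟩, ?_⟩) ⟨?_, ?_⟩
  · rw [good_skewSum, good_skewSum, addTop_inv, good_addTop, good_addTop, good_inv hτ]
    exact ⟨p.1.2, p.2.2.2.1, p.1.2⟩
  · rw [fixCount_skewSum]
    exact p.2.2.2.2
  · simp; omega
  · rintro ⟨⟨A, hA⟩, B, hB⟩ ⟨⟨A', hA'⟩, B', hB'⟩ h
    obtain ⟨h1, h2⟩ := skewSum_inj (Subtype.ext_iff.mp h)
    obtain rfl := addTop_inj h1
    obtain ⟨rfl, -⟩ := skewSum_inj h2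
    rfl
  · rintro ⟨π, ⟨hi, hg, hQ⟩, hx⟩
    obtain ⟨A, B', rfl⟩ := exists_decomp hg.1 hx
    obtain ⟨B, rfl⟩ := exists_decomp_invol hi
    rw [isInvolution_skewSum] at hi
    rw [fixCount_skewSum] at hQ
    rw [good_skewSum, good_skewSum, good_addTop] at hg
    exact ⟨⟨⟨A, hg.1⟩, B, hi, hg.2.1, hQ⟩, rfl⟩

/-- In a 132-avoiding involution the maximum is either fixed or in the first half: otherwise the
last entry equals the position of the maximum, while being one of the values of `B` in
`(A ⊕ 1) ⊖ B`, so that `B` is longer than `A`. -/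
lemma avoids132_invol_pos {N : ℕ} {π : Perm (Fin N)} (hi : IsInvolution π) (h : Avoids132 π)
    (x : Fin N) (hx : (π x : ℕ) + 1 = N) (hne : x.val + 1 ≠ N) : 2 * (x.val + 1) ≤ N := by
  obtain ⟨b, hb⟩ : ∃ b, N = x.val + 1 + b := ⟨N - (x.val + 1), by omega⟩
  obtain ⟨a, ha⟩ : ∃ a, x.val = a := ⟨_, rfl⟩
  rw [ha] at hb hne ⊢
  subst hb
  obtain rfl : x = Fin.castAdd _ (Fin.last a) := Fin.ext (by simpa using ha)
  obtain ⟨A, B, rfl⟩ := exists_decomp h hx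
  have hb : b - 1 < b := by omega
  have h1 := hi (Fin.castAdd _ (Fin.last a))
  have h2 : skewSum (addTop A) B (Fin.castAdd _ (Fin.last a)) =
      Fin.natAdd (a + 1) ⟨b - 1, hb⟩ := Fin.ext (by simp; omega)
  rw [h2] at h1
  have := congrArg Fin.val h1
  rw [skewSum_natAdd] at this
  simp at this
  omega

/-- Equinumerosity of the two classes of 132-avoiding permutations lifts from `τ, ρ` to
`τ ⊕ 1, ρ ⊕ 1`. -/
lemma card_perm_step {τ ρ : Perm (Fin (m + 1))}
    (h : ∀ n, Nat.card {π : Perm (Fin n) // Good_s8 τ π} = Nat.card {π : Perm (Fin n) // Good_s8 ρ π})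
    (n : ℕ) : Nat.card {π : Perm (Fin n) // Good_s8 (addTop τ) π} =
      Nat.card {π : Perm (Fin n) // Good_s8 (addTop ρ) π} := by
  induction n using Nat.strong_induction_on with
  | _ n ih =>
    cases n with
    | zero =>
      have h0 : ∀ σ : Perm (Fin (m + 1)), ∀ π : Perm (Fin 0), Good_s8 (addTop σ) π := fun σ π =>
        ⟨fun ⟨i, _⟩ => i.elim0, fun ⟨f, _⟩ => (f 0).elim0⟩
      simp [h0]
    | succ n =>
      rw [card_eq_sum_fiber, card_eq_sum_fiber]
      refine Finset.sum_congr rfl fun x _ => ?_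
      have hN : n + 1 = x.val + 1 + (n - x.val) := by omega
      rw [card_fiber_perm τ hN x rfl, card_fiber_perm ρ hN x rfl, h, ih _ (by omega)]

/-- The involution analogue of `card_perm_step`: passing from `τ` to `τ ⊕ 1` shifts the condition
`Q` on the number of fixed points by one. -/
lemma card_invol_step {τ ρ : Perm (Fin (m + 1))} (hτ : IsInvolution τ) (hρ : IsInvolution ρ)
    (Q : ℕ → Prop)
    (h : ∀ n, Nat.card {π : Perm (Fin n) // Good_s8 τ π} = Nat.card {π : Perm (Fin n) // Good_s8 ρ π})
    (hI : ∀ n, Nat.card {π : Perm (Fin n) // IsInvolution π ∧ Good_s8 τ π ∧ Q (fixCount π + 1)} =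
      Nat.card {π : Perm (Fin n) // IsInvolution π ∧ Good_s8 ρ π ∧ Q (fixCount π + 1)})
    (n : ℕ) :
    Nat.card {π : Perm (Fin n) // IsInvolution π ∧ Good_s8 (addTop τ) π ∧ Q (fixCount π)} =
      Nat.card {π : Perm (Fin n) // IsInvolution π ∧ Good_s8 (addTop ρ) π ∧ Q (fixCount π)} := by
  induction n using Nat.strong_induction_on with
  | _ n ih =>
    cases n with
    | zero =>
      have h0 : ∀ σ : Perm (Fin (m + 1)), ∀ π : Perm (Fin 0), Good_s8 (addTop σ) π := fun σ π =>
        ⟨fun ⟨i, _⟩ => i.elim0, fun ⟨f, _⟩ => (f 0).elim0⟩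
      simp [h0]
    | succ n =>
      rw [card_eq_sum_fiber, card_eq_sum_fiber]
      refine Finset.sum_congr rfl fun x _ => ?_
      by_cases hl : n = x.val
      · have hN : n + 1 = x.val + 1 := by omega
        rw [card_fiber_invol_last τ Q hN x rfl, card_fiber_invol_last ρ Q hN x rfl, hI]
      by_cases hm : 2 * (x.val + 1) ≤ n + 1
      · have hN : n + 1 = x.val + 1 + (n + 1 - 2 * (x.val + 1) + (x.val + 1)) := by omega
        rw [card_fiber_invol_mid hτ Q hN x rfl, card_fiber_invol_mid hρ Q hN x rfl, h,
          ih _ (by omega)]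
      · have h0 : ∀ σ : Perm (Fin (m + 1)), IsEmpty {π : Perm (Fin (n + 1)) //
            (IsInvolution π ∧ Good_s8 (addTop σ) π ∧ Q (fixCount π)) ∧ (π x : ℕ) + 1 = n + 1} :=
          fun σ => ⟨fun ⟨π, ⟨hi, hg, _⟩, hx⟩ =>
            hm (avoids132_invol_pos hi hg.1 x hx (by omega))⟩
        have := h0 τ
        have := h0 ρ
        rw [Nat.card_of_isEmpty, Nat.card_of_isEmpty]

end Counting

/-! ### The two families of patterns and the base cases -/

/-- `τ ⊕ 12…j`, for a pattern `τ` of length 2. -/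
def extend (τ : Perm (Fin 2)) : (j : ℕ) → Perm (Fin (j + 2))
  | 0 => τ
  | j + 1 => addTop (extend τ j)

lemma extend_invol {τ : Perm (Fin 2)} (h : IsInvolution τ) (j : ℕ) :
    IsInvolution (extend τ j) := by
  induction j with
  | zero => exact h
  | succ j ih => exact isInvolution_addTop.mpr ih

lemma extend_one (j : ℕ) : (extend 1 j : Fin (j + 2) → Fin (j + 2)) = id := by
  induction j with
  | zero => rfl
  | succ j ih =>
    funext i
    refine Fin.lastCases ?_ (fun i => ?_) i
    · exact addTop_last _
    · rw [extend, addTop_castSucc, ih]; rfl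

lemma extend_swap (j : ℕ) :
    (extend (swap 0 1) j : Fin (j + 2) → Fin (j + 2)) = pat2134 (j + 2) := by
  induction j with
  | zero =>
    funext i
    fin_cases i <;> rfl
  | succ j ih =>
    funext i
    refine Fin.lastCases ?_ (fun i => ?_) i
    · refine (addTop_last _).trans ?_
      simp [pat2134]
    · rw [extend, addTop_castSucc, ih]
      simp only [pat2134, Fin.val_castSucc]
      split_ifs <;> simp

lemma containsPat_one_two {n : ℕ} (π : Perm (Fin n)) :
    ContainsPat π (1 : Perm (Fin 2)) ↔ ∃ i j, i < j ∧ π i < π j := by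
  constructor
  · rintro ⟨f, hf, h⟩
    exact ⟨f 0, f 1, hf (by decide), (h 0 1).mp (by decide)⟩
  · rintro ⟨i, j, hij, h⟩
    refine ⟨![i, j], ?_, ?_⟩
    · intro x y hxy
      fin_cases x <;> fin_cases y <;> simp_all
    · intro x y
      fin_cases x <;> fin_cases y <;> simp [h, h.le]

lemma containsPat_swap_two {n : ℕ} (π : Perm (Fin n)) :
    ContainsPat π (swap 0 1 : Perm (Fin 2)) ↔ ∃ i j, i < j ∧ π j < π i := by
  constructor
  · rintro ⟨f, hf, h⟩
    exact ⟨f 0, f 1, hf (by decide), (h 1 0).mp (by decide)⟩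
  · rintro ⟨i, j, hij, h⟩
    refine ⟨![i, j], ?_, ?_⟩
    · intro x y hxy
      fin_cases x <;> fin_cases y <;> simp_all
    · intro x y
      fin_cases x <;> fin_cases y <;> simp [h, h.le]

lemma strictMono_eq_id {n : ℕ} {f : Fin n → Fin n} (hf : StrictMono f) : f = id :=
  funext fun _ => le_antisymm hf.apply_le hf.le_apply

/-- The decreasing permutation is the only one avoiding `12`. -/
lemma good_one_two_iff {n : ℕ} (π : Perm (Fin n)) :
    Good_s8 (1 : Perm (Fin 2)) π ↔ π = Fin.revPerm := by
  constructor
  · rintro ⟨-, h⟩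
    rw [containsPat_one_two] at h
    push Not at h
    have hm : StrictMono fun i => Fin.rev (π i) := fun i j hij =>
      Fin.rev_lt_rev.mpr (lt_of_le_of_ne (h i j hij) fun e => hij.ne' (π.injective e))
    ext i
    have : Fin.rev (π i) = i := congrFun (strictMono_eq_id hm) i
    rw [Fin.revPerm_apply, ← this, Fin.rev_rev, this]
  · rintro rfl
    refine ⟨?_, ?_⟩
    · rintro ⟨i, j, k, hij, hjk, h1, h2⟩
      simp only [Fin.revPerm_apply, Fin.rev_lt_rev] at h1
      exact absurd (hij.trans hjk) h1.not_gt
    · rw [containsPat_one_two]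
      rintro ⟨i, j, hij, h⟩
      simp only [Fin.revPerm_apply, Fin.rev_lt_rev] at h
      exact absurd hij h.not_gt

/-- The identity is the only permutation avoiding `21`. -/
lemma good_swap_two_iff {n : ℕ} (π : Perm (Fin n)) :
    Good_s8 (swap 0 1 : Perm (Fin 2)) π ↔ π = 1 := by
  constructor
  · rintro ⟨-, h⟩
    rw [containsPat_swap_two] at h
    push Not at h
    have hm : StrictMono π := fun i j hij =>
      lt_of_le_of_ne (h i j hij) fun e => hij.ne (π.injective e)
    ext i
    exact congrArg Fin.val (congrFun (strictMono_eq_id hm) i)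
  · rintro rfl
    refine ⟨?_, ?_⟩
    · rintro ⟨i, j, k, hij, hjk, h1, h2⟩
      exact absurd hjk h2.not_gt
    · rw [containsPat_swap_two]
      rintro ⟨i, j, hij, h⟩
      exact absurd hij h.not_gt

lemma card_perm_extend (j n : ℕ) :
    Nat.card {π : Perm (Fin n) // Good_s8 (extend 1 j) π} =
      Nat.card {π : Perm (Fin n) // Good_s8 (extend (swap 0 1) j) π} := by
  induction j generalizing n with
  | zero => simp [extend, good_one_two_iff, good_swap_two_iff]
  | succ j ih => exact card_perm_step ih n

lemma invol_one : IsInvolution (1 : Perm (Fin 2)) := fun _ => rfl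

lemma invol_swap : IsInvolution (swap 0 1 : Perm (Fin 2)) := fun i => by simp

lemma card_invol_extend (j n : ℕ) :
    Nat.card {π : Perm (Fin n) // IsInvolution π ∧ Good_s8 (extend 1 j) π ∧ True} =
      Nat.card {π : Perm (Fin n) // IsInvolution π ∧ Good_s8 (extend (swap 0 1) j) π ∧ True} := by
  induction j generalizing n with
  | zero =>
    have h1 : ∀ π : Perm (Fin n),
        IsInvolution π ∧ Good_s8 (extend 1 0) π ∧ True ↔ π = Fin.revPerm := by
      intro π
      simp only [extend, good_one_two_iff, and_true]
      exact ⟨fun h => h.2, fun h => ⟨by rintro i; simp [h], h⟩⟩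
    have h2 : ∀ π : Perm (Fin n),
        IsInvolution π ∧ Good_s8 (extend (swap 0 1) 0) π ∧ True ↔ π = 1 := by
      intro π
      simp only [extend, good_swap_two_iff, and_true]
      exact ⟨fun h => h.2, fun h => ⟨by rintro i; simp [h], h⟩⟩
    simp only [h1, h2]
    simp
  | succ j ih =>
    exact card_invol_step (extend_invol invol_one j) (extend_invol invol_swap j) (fun _ => True)
      (card_perm_extend j) ih n

/-- The refinement by fixed points starts at pattern length 3, where an involution without fixed
points never uses the case `A ⊕ 1`. -/
lemma card_invol_fix_extend (j p n : ℕ) (hp : p ≤ j) :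
    Nat.card {π : Perm (Fin n) // IsInvolution π ∧ Good_s8 (extend 1 (j + 1)) π ∧ fixCount π = p} =
      Nat.card {π : Perm (Fin n) //
        IsInvolution π ∧ Good_s8 (extend (swap 0 1) (j + 1)) π ∧ fixCount π = p} := by
  induction p generalizing j n with
  | zero =>
    exact card_invol_step (extend_invol invol_one j) (extend_invol invol_swap j) (fun q => q = 0)
      (card_perm_extend j) (fun n => by simp) n
  | succ p ih =>
    obtain ⟨j, rfl⟩ : ∃ i, j = i + 1 := ⟨j - 1, by omega⟩
    refine card_invol_step (extend_invol invol_one _) (extend_invol invol_swap _)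
      (fun q => q = p + 1) (card_perm_extend _) (fun n => ?_) n
    simpa only [Nat.add_right_cancel_iff] using ih j n (by omega)

theorem stmt8 (k : ℕ) (hk : 3 ≤ k) (n : ℕ) :
    (Nat.card {π : Equiv.Perm (Fin n) //
        IsInvolution π ∧ Avoids132 π ∧ ¬ ContainsPat π (id : Fin k → Fin k)} =
     Nat.card {π : Equiv.Perm (Fin n) //
        IsInvolution π ∧ Avoids132 π ∧ ¬ ContainsPat π (pat2134 k)}) ∧
    ∀ p : ℕ, p ≤ k - 3 →
      Nat.card {π : Equiv.Perm (Fin n) //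
          IsInvolution π ∧ Avoids132 π ∧ ¬ ContainsPat π (id : Fin k → Fin k) ∧
            fixCount π = p} =
      Nat.card {π : Equiv.Perm (Fin n) //
          IsInvolution π ∧ Avoids132 π ∧ ¬ ContainsPat π (pat2134 k) ∧
            fixCount π = p} := by
  obtain ⟨j, rfl⟩ : ∃ j, k = j + 1 + 2 := ⟨k - 3, by omega⟩
  rw [← extend_one, ← extend_swap]
  refine ⟨?_, fun p hp => ?_⟩
  · simpa only [Good_s8, and_true] using card_invol_extend (j + 1) n
  · simpa only [Good_s8, and_assoc] using card_invol_fix_extend j p n (by omega)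
end
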